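/- arXiv:1704.00719 — 3 statements merged into one kernel-verified Lean document; each statement's English description precedes it below -/
import Mathlib

section
/- Let (R, 𝔪) be a commutative noetherian local ring with an isolated singularity whose maximal ideal 𝔪 is quasi-decomposable. Then there exists no thick subcategory 𝒳 of mod R with PD(R) ⊊ 𝒳 ⊊ mod R, where PD(R) is the subcategory of modules of finite projective dimension. -/
/-!
Let `𝒳` be a thick subcategory of `mod R` that contains all modules of finite projective dimension
and a module `A` of infinite projective dimension. The claim is that the residue field `k` lies
in `𝒳`, and that this forces `𝒳 = mod R`.

*From `k ∈ 𝒳` to `𝒳 = mod R`* (`quotient_mem`, `finite_mem`). By prime filtrations it is enough to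
treat the modules `R ⧸ I`, by noetherian induction on `I`; only primes `𝔭 ≠ 𝔪` need an argument.
For `a ∉ 𝔭` the module `R ⧸ (𝔭 + (a))` is in `𝒳` by induction. Since `R_𝔭` is regular, its residue
field `(R ⧸ 𝔭)_𝔭` has finite projective dimension (`localized_residue_pd`). The lemma
`mem_of_pullback` then applies: for a free cover `π : F → A` and `a : R`, let `pullbackSMul π a` be
the pullback of `π` along `a : A → A`. If `A_𝔭` is projective, then some multiplication
`a : A → A` with `a ∉ 𝔭` factors through `π`, so that `A` is a direct summand of `pullbackSMul π a`.
If `A_𝔭` has positive finite projective dimension, one passes to the first syzygy of `A`, using that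
membership of `pullbackSMul` in `𝒳` is inherited by syzygies (`thick_pullbackSMul_ker`).

*From `A` to `k ∈ 𝒳`*. Let `𝐱` be the regular sequence and `S = R ⧸ (𝐱)`, so that the image of `𝔪`
in `S` is `I ⊕ J` with `I, J ≠ 0`. Replacing a module by its first syzygy makes an element which is
regular on the ring regular on the module, and a minimal resolution stays minimal and exact after
reducing modulo such an element (`long_quot`). Hence `𝒳` contains `S` and an `S`-module whose second
syzygy `N₂` over `S` is nonzero (`exists_long_quotient`). Because `N₂` is the kernel of a map
between free `S`-modules and lies in `𝔪` times a free module, it splits as `U ⊕ V`, with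
`U` in a power of `I` and `V` in a power of `J`. Say `U ≠ 0`. It is annihilated by `J`, so the first
`S`-syzygy of `U` has `J` as a direct summand, and `J ∈ 𝒳` (`summand_mem_of_killed`). The same
argument applied to `J` gives `I ∈ 𝒳`. Therefore `I ⊕ J = 𝔪 S` is in `𝒳`, and so is
`S ⧸ 𝔪 S = k`.
-/

universe u

open IsLocalRing CategoryTheory

/-- A minimal free resolution of the module `M` over the local ring `R`:
`⋯ → R^{rank 2} → R^{rank 1} → R^{rank 0} → M → 0` is exact, and each differential maps into
`𝔪` times the next free module (minimality). -/
structure MinimalFreeResolution (R : Type u) [CommRing R] [IsLocalRing R]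
    (M : Type u) [AddCommGroup M] [Module R M] where
  rank : ℕ → ℕ
  aug : (Fin (rank 0) → R) →ₗ[R] M
  d : (i : ℕ) → ((Fin (rank (i + 1)) → R) →ₗ[R] (Fin (rank i) → R))
  aug_surjective : Function.Surjective aug
  exact_aug : LinearMap.ker aug = LinearMap.range (d 0)
  exact : ∀ i, LinearMap.ker (d i) = LinearMap.range (d (i + 1))
  minimal : ∀ i, LinearMap.range (d i) ≤
    (maximalIdeal R) • (⊤ : Submodule R (Fin (rank i) → R))

/-- `S` is an `i`-th syzygy `Ω^i M` of `M`, i.e. the `i`-th kernel computed from a minimal free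
resolution of `M` over the local ring `R` (`Ω⁰M = M`, `Ω¹M = ker aug`, `Ω^{j+2}M = ker (d j)`). -/
def IsNthSyzygy (R : Type u) [CommRing R] [IsLocalRing R] (i : ℕ)
    (M : Type u) [AddCommGroup M] [Module R M]
    (S : Type u) [AddCommGroup S] [Module R S] : Prop :=
  ∃ F : MinimalFreeResolution R M,
    match i with
    | 0 => Nonempty (S ≃ₗ[R] M)
    | 1 => Nonempty (S ≃ₗ[R] LinearMap.ker F.aug)
    | (j + 2) => Nonempty (S ≃ₗ[R] LinearMap.ker (F.d j))

/-- `pd_R M ≤ n`: a minimal free resolution of `M` vanishes in homological degrees `> n`. -/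
def ProjDimLE (R : Type u) [CommRing R] [IsLocalRing R]
    (M : Type u) [AddCommGroup M] [Module R M] (n : ℕ) : Prop :=
  ∃ F : MinimalFreeResolution R M, ∀ i, n < i → F.rank i = 0

/-- `A` is a direct summand of the `R`-module `X`. -/
def IsDirectSummand (R : Type u) [CommRing R] (A X : Type u)
    [AddCommGroup A] [Module R A] [AddCommGroup X] [Module R X] : Prop :=
  ∃ (ι : A →ₗ[R] X) (π : X →ₗ[R] A), π.comp ι = LinearMap.id

/-- A thick subcategory of `mod R` (the finitely generated `R`-modules): a collection of (f.g.)
modules, closed under isomorphism and direct summands, satisfying two-out-of-three for short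
exact sequences. -/
structure IsThickSubcat (R : Type u) [CommRing R] (P : ModuleCat.{u} R → Prop) : Prop where
  fg : ∀ A, P A → Module.Finite R A
  iso_closed : ∀ A B : ModuleCat.{u} R, Nonempty (A ≃ₗ[R] B) → P A → P B
  summand_closed : ∀ A B : ModuleCat.{u} R,
    (∃ (ι : B →ₗ[R] A) (π : A →ₗ[R] B), π.comp ι = LinearMap.id) → P A → P B
  two_of_three : ∀ (A B C : ModuleCat.{u} R) (f : A →ₗ[R] B) (g : B →ₗ[R] C),
    Function.Injective f → Function.Surjective g → LinearMap.ker g = LinearMap.range f →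
    ((P A → P B → P C) ∧ (P A → P C → P B) ∧ (P B → P C → P A))

/-- A module is decomposable if it is the (internal) direct sum of two nonzero submodules. -/
def IsDecomposableModule (A : Type u) [CommRing A] (M : Type u) [AddCommGroup M]
    [Module A M] : Prop :=
  ∃ N₁ N₂ : Submodule A M, N₁ ≠ ⊥ ∧ N₂ ≠ ⊥ ∧ N₁ ⊓ N₂ = ⊥ ∧ N₁ ⊔ N₂ = ⊤

/-- The maximal ideal `𝔪` of `R` is quasi-decomposable: there is an `R`-regular sequence `𝐱` in
`𝔪` such that `𝔪/(𝐱)` is decomposable. -/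
def HasQuasiDecomposableMaxIdeal (R : Type u) [CommRing R] [IsLocalRing R] : Prop :=
  ∃ x : List R, (∀ a ∈ x, a ∈ maximalIdeal R) ∧ RingTheory.Sequence.IsRegular R x ∧
    IsDecomposableModule (R ⧸ Ideal.ofList x)
      (↥((maximalIdeal R).map (Ideal.Quotient.mk (Ideal.ofList x))))

/-- A commutative ring is regular local if it is noetherian local and its maximal ideal can be
generated by `dim`-many elements. -/
def IsRegularLocal (A : Type u) [CommRing A] : Prop :=
  IsNoetherianRing A ∧ ∃ _h : IsLocalRing A, ∃ s : Finset A,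
    Ideal.span (s : Set A) = maximalIdeal A ∧
    (s.card : WithBot (WithTop ℕ)) = ringKrullDim A

/-- `R` has an isolated singularity: `R_𝔭` is regular local for every non-maximal prime `𝔭`. -/
def HasIsolatedSingularity (R : Type u) [CommRing R] [IsLocalRing R] : Prop :=
  ∀ (p : Ideal R) [p.IsPrime], p ≠ maximalIdeal R → IsRegularLocal (Localization.AtPrime p)

/-! ### Regular local rings -/

/-- A noetherian local ring whose maximal ideal has at most `n ≤ dim A` generators is a domain, and
its maximal ideal is generated by a weakly regular sequence. The induction divides by an element
of `𝔪` lying outside `𝔪 ^ 2` and outside all minimal primes. -/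
theorem isDomain_and_exists_regular_generators (n : ℕ) : ∀ (A : Type u) [CommRing A] [IsLocalRing A] [IsNoetherianRing A]
    (s : Finset A), Ideal.span (s : Set A) = maximalIdeal A → s.card ≤ n →
    (n : WithBot ℕ∞) ≤ ringKrullDim A →
    IsDomain A ∧ ∃ rs : List A, RingTheory.Sequence.IsWeaklyRegular A rs ∧
      Ideal.ofList rs = maximalIdeal A := by
  induction n with
  | zero =>
    intro A _ _ _ s hs hc _
    obtain rfl : s = ∅ := by simpa using hc
    have hm : maximalIdeal A = ⊥ := by rw [← hs]; simp
    refine ⟨(IsLocalRing.isField_iff_maximalIdeal_eq.mpr hm).isDomain, [], by simp, by simp [hm]⟩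
  | succ n ih =>
    intro A _ _ _ s hs hc hd
    classical
    have hmin : ¬ maximalIdeal A ∈ minimalPrimes A := by
      intro h
      have h0 : (maximalIdeal A).height = 0 := by
        rw [Ideal.height_eq_zero_iff]; exact h
      rw [← IsLocalRing.maximalIdeal_height_eq_ringKrullDim, h0] at hd
      have : (n + 1 : ℕ) ≤ 0 := by exact_mod_cast hd
      omega
    have hsq : ¬ maximalIdeal A ≤ maximalIdeal A ^ 2 := by
      intro h
      have hb : maximalIdeal A = ⊥ := by
        refine Submodule.eq_bot_of_le_smul_of_le_jacobson_bot (maximalIdeal A) _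
          (IsNoetherian.noetherian _) ?_ (IsLocalRing.maximalIdeal_le_jacobson _)
        rwa [smul_eq_mul, ← sq]
      apply hmin
      have := (IsLocalRing.isField_iff_maximalIdeal_eq.mpr hb).isDomain
      rw [hb, IsDomain.minimalPrimes_eq_singleton_bot]; rfl
    obtain ⟨x, hxm, hx2, hxq⟩ : ∃ x ∈ maximalIdeal A, x ∉ maximalIdeal A ^ 2 ∧
        ∀ q ∈ minimalPrimes A, x ∉ q := by
      by_contra! hcon
      have hfin := minimalPrimes.finite_of_isNoetherianRing A
      have := (Ideal.subset_union_prime_finite (f := id) (hfin.insert (maximalIdeal A ^ 2))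
        (maximalIdeal A ^ 2) (maximalIdeal A ^ 2) (I := maximalIdeal A) (by
          rintro q (rfl | hq) h _
          · exact absurd rfl h
          · exact hq.1.1)).1 (by
          intro y hy
          simp only [Set.mem_iUnion]
          by_cases h2 : y ∈ maximalIdeal A ^ 2
          · exact ⟨_, Or.inl rfl, h2⟩
          · obtain ⟨q, hq, hyq⟩ := hcon y hy h2
            exact ⟨q, Or.inr hq, hyq⟩)
      obtain ⟨q, hq | hq, hle⟩ := this
      · subst hq; exact hsq hle
      · have hp : q.IsPrime := hq.1.1
        have : q = maximalIdeal A := le_antisymm (IsLocalRing.le_maximalIdeal hp.ne_top) hle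
        exact hmin (this ▸ hq)
    -- exchange `x` with one of the generators
    obtain ⟨y, hy, hspan⟩ : ∃ y ∈ s, maximalIdeal A ≤
        Ideal.span {x} ⊔ Ideal.span ((s.erase y : Finset A) : Set A) := by
      have hx' := hxm
      rw [← hs] at hx'
      obtain ⟨c, hc'⟩ := Submodule.mem_span_finset'.1 hx'
      have : ∃ y : s, IsUnit (c y) := by
        by_contra! hcon
        apply hx2
        rw [← hc', sq]
        refine Ideal.sum_mem _ fun y _ => Ideal.mul_mem_mul ((mem_maximalIdeal _).2 (hcon y)) ?_
        rw [← hs]; exact Ideal.subset_span y.2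
      obtain ⟨y, hu⟩ := this
      refine ⟨y, y.2, ?_⟩
      have hrest : ∀ z ∈ s, z ≠ y → z ∈ Ideal.span {x} ⊔
          Ideal.span ((s.erase (y : A) : Finset A) : Set A) := fun z hz hzy =>
        Ideal.mem_sup_right (Ideal.subset_span (by simp [hz, hzy]))
      rw [← hs, Ideal.span_le]
      intro z hz
      by_cases hzy : z = y
      · subst hzy
        rw [← Finset.add_sum_erase _ _ (Finset.mem_univ y)] at hc'
        have h1 : c y • (y : A) ∈ Ideal.span {x} ⊔
            Ideal.span ((s.erase (y : A) : Finset A) : Set A) := by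
          rw [eq_sub_of_add_eq hc']
          refine Ideal.sub_mem _ (Ideal.mem_sup_left (Ideal.mem_span_singleton_self x)) ?_
          refine Ideal.sum_mem _ fun w hw => Ideal.mul_mem_left _ _ (hrest _ w.2 ?_)
          exact fun h => Finset.ne_of_mem_erase hw (Subtype.ext h)
        exact (Ideal.unit_mul_mem_iff_mem _ hu).1 h1
      · exact hrest z hz hzy
    have hxle : Ideal.span {x} ≤ maximalIdeal A := by
      rw [Ideal.span_le]; simpa using hxm
    have hnt : Nontrivial (A ⧸ Ideal.span {x}) := Ideal.Quotient.nontrivial_iff.2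
      (ne_top_of_le_ne_top (maximalIdeal.isMaximal A).ne_top hxle)
    have hsurj := Ideal.Quotient.mk_surjective (I := Ideal.span {x})
    have : IsLocalRing (A ⧸ Ideal.span {x}) := IsLocalRing.of_surjective' _ hsurj
    have hmap : (maximalIdeal A).map (Ideal.Quotient.mk (Ideal.span {x})) =
        maximalIdeal (A ⧸ Ideal.span {x}) :=
      IsLocalRing.map_maximalIdeal_of_surjective _ hsurj
    obtain ⟨hdom, rs', hreg', hspan'⟩ := ih (A ⧸ Ideal.span {x})
      ((s.erase y).image (Ideal.Quotient.mk (Ideal.span {x}))) (by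
        rw [← hmap]
        apply le_antisymm
        · rw [Ideal.span_le]
          intro z hz
          simp only [Finset.coe_image, Set.mem_image] at hz
          obtain ⟨w, hw, rfl⟩ := hz
          refine Ideal.mem_map_of_mem _ ?_
          rw [← hs]; exact Ideal.subset_span (Finset.mem_of_mem_erase hw)
        · refine (Ideal.map_mono hspan).trans ?_
          rw [Ideal.map_sup, Ideal.map_span, Ideal.map_span, Finset.coe_image]
          simp)
      (by
        refine Finset.card_image_le.trans ?_
        rw [Finset.card_erase_of_mem hy]; omega)
      (by
        have h1 := ringKrullDim_le_ringKrullDim_quotient_add_card ({x} : Finset A) (by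
          intro z hz
          obtain rfl : z = x := by simpa using hz
          rwa [SetLike.mem_coe, IsLocalRing.ringJacobson_eq_maximalIdeal])
        have h2 := hd.trans h1
        simp only [Finset.card_singleton, Nat.cast_one, Nat.cast_add] at h2
        rw [Finset.coe_singleton] at h2
        revert h2
        generalize ringKrullDim (A ⧸ Ideal.span {x}) = D
        intro h2
        exact ENat.WithBot.add_le_add_one_right_iff.1 h2)
    have hpr : (Ideal.span {x}).IsPrime := (Ideal.Quotient.isDomain_iff_prime _).1 hdom
    have hx0 : x ≠ 0 := by
      rintro rfl
      exact hx2 (Ideal.zero_mem _)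
    have hA : IsDomain A := by
      obtain ⟨q, hq, hqx⟩ := Ideal.exists_minimalPrimes_le (I := ⊥) (J := Ideal.span {x}) bot_le
      have hqp : q.IsPrime := hq.1.1
      have hb : q = ⊥ := by
        refine Submodule.eq_bot_of_le_smul_of_le_jacobson_bot (Ideal.span {x}) _
          (IsNoetherian.noetherian _) ?_ (hxle.trans (IsLocalRing.maximalIdeal_le_jacobson _))
        intro z hz
        obtain ⟨w, rfl⟩ := Ideal.mem_span_singleton'.1 (hqx hz)
        rw [mul_comm]
        exact Ideal.mul_mem_mul (Ideal.mem_span_singleton_self x)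
          ((hqp.mem_or_mem hz).resolve_right (hxq q hq))
      subst hb
      exact IsDomain.of_bot_isPrime A
    refine ⟨hA, ?_⟩
    obtain ⟨rs, rfl⟩ := List.map_surjective_iff.2 hsurj rs'
    refine ⟨x :: rs, ?_, ?_⟩
    · rw [RingTheory.Sequence.isWeaklyRegular_cons_iff]
      constructor
      · intro a b hab
        exact mul_left_cancel₀ hx0 hab
      · have h1 := (RingTheory.Sequence.isWeaklyRegular_map_algebraMap_iff
          (A ⧸ Ideal.span {x}) (A ⧸ Ideal.span {x}) rs).1 hreg'
        refine (LinearEquiv.isWeaklyRegular_congr (Submodule.quotEquivOfEq _ _ ?_) rs).1 h1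
        rw [← Submodule.ideal_span_singleton_smul]
        simp
    · rw [Ideal.ofList_cons]
      have h1 : (Ideal.ofList rs).map (Ideal.Quotient.mk (Ideal.span {x})) =
          (maximalIdeal A).map (Ideal.Quotient.mk (Ideal.span {x})) := by
        rw [hmap, ← hspan', Ideal.map_ofList]
      have h2 := congrArg (Ideal.comap (Ideal.Quotient.mk (Ideal.span {x}))) h1
      rw [Ideal.comap_map_of_surjective' _ hsurj, Ideal.comap_map_of_surjective' _ hsurj,
        Ideal.mk_ker, sup_comm, sup_of_le_left hxle] at h2
      exact h2

/-- The residue field of a regular local ring has finite projective dimension. -/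
theorem regular_residue_pd (A : Type u) [CommRing A] [IsLocalRing A] (hA : IsRegularLocal A) :
    ∃ n : ℕ, HasProjectiveDimensionLE (ModuleCat.of A (A ⧸ maximalIdeal A)) n := by
  obtain ⟨hN, hloc, s, hs, hd⟩ := hA
  obtain ⟨-, rs, hreg, hspan⟩ := isDomain_and_exists_regular_generators s.card A s hs le_rfl (le_of_eq hd)
  have h := ModuleCat.projectiveDimension_quotient_eq_add_length_of_isWeaklyRegular
    (ModuleCat.of A A) rs hreg (fun r hr => hspan ▸ Ideal.subset_span hr)
  rw [ModuleCat.projectiveDimension_eq_zero_of_projective (ModuleCat.of A A), zero_add] at h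
  refine ⟨rs.length, ?_⟩
  have h' := (projectiveDimension_le_iff _ rs.length).1 h.le
  exact ModuleCat.hasProjectiveDimensionLE_of_linearEquiv
    (M := ModuleCat.of A (A ⧸ Ideal.ofList rs • (⊤ : Submodule A A)))
    (N := ModuleCat.of A (A ⧸ maximalIdeal A))
    (Submodule.quotEquivOfEq _ _ (by rw [hspan]; simp)) rs.length

theorem localized_residue_pd (R : Type u) [CommRing R] (p : Ideal R) [p.IsPrime]
    (hp : IsRegularLocal (Localization.AtPrime p)) :
    ∃ n : ℕ, HasProjectiveDimensionLE
      ((ModuleCat.of R (R ⧸ p)).localizedModule p.primeCompl) n := by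
  obtain ⟨n, hn⟩ := regular_residue_pd _ hp
  refine ⟨n, ?_⟩
  let A := Localization.AtPrime p
  let q := Submodule.localized' A p.primeCompl (Algebra.linearMap R A) p
  have hq : q = maximalIdeal A := by
    rw [← IsLocalization.AtPrime.map_eq_maximalIdeal p A]
    exact Ideal.localized'_eq_map A p.primeCompl p
  have := IsLocalizedModule.toLocalizedQuotient' A p.primeCompl (Algebra.linearMap R A) p
  have := (ModuleCat.of R (R ⧸ p)).localizedModule_isLocalizedModule p.primeCompl
  let e : ((ModuleCat.of R (R ⧸ p)).localizedModule p.primeCompl) ≃ₗ[A] (A ⧸ q) :=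
    LinearEquiv.extendScalarsOfIsLocalization p.primeCompl A
      (IsLocalizedModule.linearEquiv p.primeCompl
        ((ModuleCat.of R (R ⧸ p)).localizedModuleMkLinearMap p.primeCompl)
        (Submodule.toLocalizedQuotient' A p.primeCompl (Algebra.linearMap R A) p))
  exact ModuleCat.hasProjectiveDimensionLE_of_linearEquiv
    (M := ModuleCat.of A (A ⧸ maximalIdeal A))
    ((Submodule.quotEquivOfEq _ _ hq.symm).trans e.symm) n


/-! ### Thick subcategories and pullbacks along multiplications -/

section Thick

variable {R : Type u} [CommRing R] {P : ModuleCat.{u} R → Prop}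

theorem thick_right (h : IsThickSubcat R P) {A B C : Type u} [AddCommGroup A] [Module R A]
    [AddCommGroup B] [Module R B] [AddCommGroup C] [Module R C] (f : A →ₗ[R] B) (g : B →ₗ[R] C)
    (hf : Function.Injective f) (hg : Function.Surjective g)
    (hex : LinearMap.ker g = LinearMap.range f)
    (hA : P (ModuleCat.of R A)) (hB : P (ModuleCat.of R B)) : P (ModuleCat.of R C) :=
  (h.two_of_three (ModuleCat.of R A) (ModuleCat.of R B) (ModuleCat.of R C) f g hf hg hex).1 hA hB

theorem thick_mid (h : IsThickSubcat R P) {A B C : Type u} [AddCommGroup A] [Module R A]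
    [AddCommGroup B] [Module R B] [AddCommGroup C] [Module R C] (f : A →ₗ[R] B) (g : B →ₗ[R] C)
    (hf : Function.Injective f) (hg : Function.Surjective g)
    (hex : LinearMap.ker g = LinearMap.range f)
    (hA : P (ModuleCat.of R A)) (hC : P (ModuleCat.of R C)) : P (ModuleCat.of R B) :=
  (h.two_of_three (ModuleCat.of R A) (ModuleCat.of R B) (ModuleCat.of R C) f g hf hg hex).2.1 hA hC

theorem thick_left (h : IsThickSubcat R P) {A B C : Type u} [AddCommGroup A] [Module R A]
    [AddCommGroup B] [Module R B] [AddCommGroup C] [Module R C] (f : A →ₗ[R] B) (g : B →ₗ[R] C)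
    (hf : Function.Injective f) (hg : Function.Surjective g)
    (hex : LinearMap.ker g = LinearMap.range f)
    (hB : P (ModuleCat.of R B)) (hC : P (ModuleCat.of R C)) : P (ModuleCat.of R A) :=
  (h.two_of_three (ModuleCat.of R A) (ModuleCat.of R B) (ModuleCat.of R C) f g hf hg hex).2.2 hB hC

theorem thick_ker (h : IsThickSubcat R P) {B C : Type u}
    [AddCommGroup B] [Module R B] [AddCommGroup C] [Module R C] (g : B →ₗ[R] C)
    (hg : Function.Surjective g)
    (hB : P (ModuleCat.of R B)) (hC : P (ModuleCat.of R C)) :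
    P (ModuleCat.of R (LinearMap.ker g)) :=
  thick_left h (LinearMap.ker g).subtype g Subtype.val_injective hg (by simp) hB hC

theorem thick_equiv (h : IsThickSubcat R P) {A B : Type u} [AddCommGroup A] [Module R A]
    [AddCommGroup B] [Module R B] (e : A ≃ₗ[R] B) (hA : P (ModuleCat.of R A)) :
    P (ModuleCat.of R B) :=
  h.iso_closed (ModuleCat.of R A) (ModuleCat.of R B) ⟨e⟩ hA

theorem thick_summand (h : IsThickSubcat R P) {A B : Type u} [AddCommGroup A] [Module R A]
    [AddCommGroup B] [Module R B] (ι : B →ₗ[R] A) (π : A →ₗ[R] B) (hι : ∀ b, π (ι b) = b)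
    (hA : P (ModuleCat.of R A)) : P (ModuleCat.of R B) :=
  h.summand_closed (ModuleCat.of R A) (ModuleCat.of R B) ⟨ι, π, LinearMap.ext hι⟩ hA

theorem thick_pi (h : IsThickSubcat R P) {A : Type u} [AddCommGroup A] [Module R A]
    (hA : P (ModuleCat.of R A)) (n : ℕ) : P (ModuleCat.of R (Fin n → A)) := by
  induction n with
  | zero => exact thick_summand h 0 0 (fun b => Subsingleton.elim _ _) hA
  | succ n ih =>
    refine thick_mid h (LinearMap.single R (fun _ : Fin (n + 1) => A) 0)
      (LinearMap.funLeft R A Fin.succ) (fun x y hxy => by simpa using congrFun hxy 0) ?_ ?_ hA ih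
    · exact LinearMap.funLeft_surjective_of_injective _ _ _ (Fin.succ_injective n)
    · ext x
      constructor
      · intro hx
        refine ⟨x 0, ?_⟩
        ext i
        refine Fin.cases (by simp) (fun j => ?_) i
        have := congrFun (LinearMap.mem_ker.1 hx) j
        simp [LinearMap.funLeft_apply] at this
        simp [this]
      · rintro ⟨y, rfl⟩
        rw [LinearMap.mem_ker]
        ext j
        simp [LinearMap.funLeft_apply]

/-- For a free cover `π : F → A` and `a : R`, the pullback of `π` along multiplication by `a`
on `A`. It plays the role of the (shifted) mapping cone of `a : A → A`. -/
def pullbackSMul {A F : Type u} [AddCommGroup A] [Module R A] [AddCommGroup F] [Module R F]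
    (π : F →ₗ[R] A) (a : R) : Submodule R (F × A) :=
  LinearMap.ker (π.comp (LinearMap.fst R F A) - a • LinearMap.snd R F A)

theorem mem_pullbackSMul {A F : Type u} [AddCommGroup A] [Module R A] [AddCommGroup F] [Module R F]
    (π : F →ₗ[R] A) (a : R) (z : F × A) : z ∈ pullbackSMul π a ↔ π z.1 = a • z.2 := by
  simp [pullbackSMul, sub_eq_zero]

/-- There is a short exact sequence `0 → pullbackSMul ρ a → G × F → pullbackSMul π a → 0`, given by
`(g, x) ↦ (g, -x)` and `(g, f) ↦ (ρ g + a • f, π f)`; so membership of `pullbackSMul π a` in a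
thick subcategory passes to the corresponding pullback for the syzygy `ker π`. -/
theorem thick_pullbackSMul_ker (h : IsThickSubcat R P) {A F G : Type u}
    [AddCommGroup A] [Module R A] [AddCommGroup F] [Module R F] [AddCommGroup G] [Module R G]
    (π : F →ₗ[R] A) (hπ : Function.Surjective π) (ρ : G →ₗ[R] LinearMap.ker π)
    (hρ : Function.Surjective ρ) (a : R) (hG : P (ModuleCat.of R G)) (hF : P (ModuleCat.of R F))
    (hP : P (ModuleCat.of R (pullbackSMul π a))) :
    P (ModuleCat.of R (pullbackSMul ρ a)) := by
  have hGF : P (ModuleCat.of R (G × F)) :=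
    thick_mid h (LinearMap.inl R G F) (LinearMap.snd R G F) LinearMap.inl_injective
      LinearMap.snd_surjective (LinearMap.range_inl R G F).symm hG hF
  let f : pullbackSMul ρ a →ₗ[R] G × F :=
    (LinearMap.prodMap LinearMap.id (-(LinearMap.ker π).subtype)).comp
      (pullbackSMul ρ a).subtype
  let g : G × F →ₗ[R] pullbackSMul π a :=
    LinearMap.codRestrict (pullbackSMul π a)
      (LinearMap.prod ((LinearMap.ker π).subtype.comp (ρ.comp (LinearMap.fst R G F)) +
        a • LinearMap.snd R G F) (π.comp (LinearMap.snd R G F))) (by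
        intro z
        rw [mem_pullbackSMul]
        simp)
  refine thick_left h f g ?_ ?_ ?_ hGF hP
  · rintro ⟨⟨x, y⟩, hx⟩ ⟨⟨x', y'⟩, hx'⟩ hxy
    simp only [f, LinearMap.comp_apply, Submodule.subtype_apply, LinearMap.prodMap_apply,
      LinearMap.id_apply, LinearMap.neg_apply, Prod.mk.injEq, neg_inj, SetLike.coe_eq_coe] at hxy
    simp [hxy.1, hxy.2]
  · rintro ⟨⟨f', x⟩, hx⟩
    rw [mem_pullbackSMul] at hx
    obtain ⟨f0, rfl⟩ := hπ x
    obtain ⟨g0, hg0⟩ := hρ ⟨f' - a • f0, by simpa [sub_eq_zero] using hx⟩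
    refine ⟨(g0, f0), ?_⟩
    apply Subtype.ext
    simp [g, hg0]
  · ext ⟨g0, f0⟩
    rw [LinearMap.mem_ker, LinearMap.mem_range]
    constructor
    · intro hz
      have h1 : (ρ g0 : F) + a • f0 = 0 ∧ π f0 = 0 := by
        have := congrArg Subtype.val hz
        simpa [g] using this
      refine ⟨⟨(g0, ⟨-f0, by simp [h1.2]⟩), ?_⟩, by simp [f]⟩
      rw [mem_pullbackSMul]
      apply Subtype.ext
      simpa [eq_neg_iff_add_eq_zero] using h1.1
    · rintro ⟨⟨⟨x, y⟩, hx⟩, hxy⟩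
      rw [mem_pullbackSMul] at hx
      simp only [f, LinearMap.comp_apply, Submodule.subtype_apply, LinearMap.prodMap_apply,
        LinearMap.id_apply, LinearMap.neg_apply, Prod.mk.injEq] at hxy
      obtain ⟨rfl, rfl⟩ := hxy
      apply Subtype.ext
      simp only at hx
      simp [g, hx]

/-- If `A_𝔭` is projective, a section of `π_𝔭` can be cleared of denominators: a multiple of the
identity of `A` by some `a ∉ 𝔭` factors through `π`. -/
theorem exists_section_smul [IsNoetherianRing R] (p : Ideal R) [p.IsPrime] {A F : Type u}
    [AddCommGroup A] [Module R A] [Module.Finite R A] [AddCommGroup F] [Module R F]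
    (π : F →ₗ[R] A) (hπ : Function.Surjective π)
    (hproj : Module.Projective (Localization.AtPrime p) (LocalizedModule p.primeCompl A)) :
    ∃ a ∉ p, ∃ s : A →ₗ[R] F, ∀ x, π (s x) = a • x := by
  have : Module.FinitePresentation R A := Module.finitePresentation_of_finite R A
  let S := p.primeCompl
  obtain ⟨σ, hσ⟩ := Module.projective_lifting_property (LocalizedModule.map S π) LinearMap.id
    (LocalizedModule.map_surjective S π hπ)
  obtain ⟨t, s, hts⟩ := Module.FinitePresentation.exists_lift_of_isLocalizedModule S
    (LocalizedModule.mkLinearMap S F)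
    ((σ.restrictScalars R).comp (LocalizedModule.mkLinearMap S A))
  obtain ⟨s', hs'⟩ := Module.Finite.exists_smul_of_comp_eq_of_isLocalizedModule S
    (LocalizedModule.mkLinearMap S A) (π.comp t) (s • LinearMap.id) (by
      ext x
      have h1 := LinearMap.congr_fun hts x
      have h2 := congrArg (LocalizedModule.map S π) h1
      have h3 := LinearMap.congr_fun hσ (LocalizedModule.mkLinearMap S A x)
      simp only [LinearMap.comp_apply, LinearMap.smul_apply, LinearMap.restrictScalars_apply,
        LinearMap.id_apply] at h2 h3
      have h4 : ∀ y : F, LocalizedModule.map S π (LocalizedModule.mkLinearMap S F y) =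
          LocalizedModule.mkLinearMap S A (π y) := by
        intro y
        simp [LocalizedModule.mkLinearMap_apply, LocalizedModule.map_mk]
      rw [h4, Submonoid.smul_def, ← algebraMap_smul (Localization.AtPrime p) (s : R),
        LinearMap.map_smul, h3, algebraMap_smul] at h2
      simpa [Submonoid.smul_def] using h2)
  refine ⟨s' * s, (s' * s).2, (s' : R) • t, fun x => ?_⟩
  have := LinearMap.congr_fun hs' x
  simpa [mul_smul, Submonoid.smul_def] using this

end Thick

/-! ### The residue field generates `mod R` over an isolated singularity -/

section Generation

variable {R : Type u} [CommRing R] {P : ModuleCat.{u} R → Prop}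

theorem projective_localizedModule (p : Ideal R) [p.IsPrime] (A : Type u) [AddCommGroup A]
    [Module R A]
    (h : HasProjectiveDimensionLE ((ModuleCat.of R A).localizedModule p.primeCompl) 0) :
    Module.Projective (Localization.AtPrime p) (LocalizedModule p.primeCompl A) := by
  simp only [HasProjectiveDimensionLE, zero_add] at h
  rw [← projective_iff_hasProjectiveDimensionLT_one, ← IsProjective.iff_projective] at h
  have := (ModuleCat.of R A).localizedModule_isLocalizedModule p.primeCompl
  exact Module.Projective.of_equiv
    (LinearEquiv.extendScalarsOfIsLocalization p.primeCompl (Localization.AtPrime p)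
      (IsLocalizedModule.linearEquiv p.primeCompl
        ((ModuleCat.of R A).localizedModuleMkLinearMap p.primeCompl)
        (LocalizedModule.mkLinearMap p.primeCompl A)))

/-- If `A_𝔭` has finite projective dimension, then `A` belongs to a thick subcategory containing the
free modules as soon as all the pullbacks `pullbackSMul π a`, `a ∉ 𝔭`, do. -/
theorem mem_of_pullback [IsNoetherianRing R] (h : IsThickSubcat R P)
    (hfree : ∀ n : ℕ, P (ModuleCat.of R (Fin n → R))) (p : Ideal R) [p.IsPrime] (n : ℕ) :
    ∀ (A : Type u) [AddCommGroup A] [Module R A] [Module.Finite R A] (r : ℕ)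
      (π : (Fin r → R) →ₗ[R] A), Function.Surjective π →
      HasProjectiveDimensionLE ((ModuleCat.of R A).localizedModule p.primeCompl) n →
      (∀ a ∉ p, P (ModuleCat.of R (pullbackSMul π a))) → P (ModuleCat.of R A) := by
  induction n with
  | zero =>
    intro A _ _ _ r π hπ hpd hP
    obtain ⟨a, ha, s, hs⟩ := exists_section_smul p π hπ (projective_localizedModule p A hpd)
    refine thick_summand h
      (LinearMap.codRestrict (pullbackSMul π a) (LinearMap.prod s LinearMap.id) (fun x => ?_))
      ((LinearMap.snd R _ A).comp (pullbackSMul π a).subtype) (fun x => rfl) (hP a ha)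
    rw [mem_pullbackSMul]
    exact hs x
  | succ n ih =>
    intro A _ _ _ r π hπ hpd hP
    obtain ⟨m, ρ, hρ⟩ := Module.Finite.exists_fin' R (LinearMap.ker π)
    have hS := LinearMap.shortExact_shortComplexKer hπ
    have hT := hS.map_of_exact (ModuleCat.localizedModuleFunctor p.primeCompl)
    have hproj : Projective (ModuleCat.of R (Fin r → R)) :=
      (IsProjective.iff_projective _).1 inferInstance
    have : Projective ((ModuleCat.localizedModuleFunctor p.primeCompl).obj
      (ModuleCat.of R (Fin r → R))) := Functor.projective_obj _ _
    have hk : HasProjectiveDimensionLE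
        ((ModuleCat.of R (LinearMap.ker π)).localizedModule p.primeCompl) n :=
      (hT.hasProjectiveDimensionLT_X₃_iff n this).1 hpd
    have hK := ih (LinearMap.ker π) m ρ hρ hk
      (fun a ha => thick_pullbackSMul_ker h π hπ ρ hρ a (hfree m) (hfree r) (hP a ha))
    exact thick_right h (LinearMap.ker π).subtype π Subtype.val_injective hπ (by simp) hK (hfree r)

theorem quotient_mem [IsNoetherianRing R] [IsLocalRing R] (h : IsThickSubcat R P)
    (hiso : HasIsolatedSingularity R) (hfree : ∀ n : ℕ, P (ModuleCat.of R (Fin n → R)))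
    (hk : P (ModuleCat.of R (R ⧸ maximalIdeal R))) (I : Ideal R) :
    P (ModuleCat.of R (R ⧸ I)) := by
  have hmk : ∀ (K : Ideal R) (y : R), K.mkQ y = 0 ↔ y ∈ K :=
    fun K y => Submodule.Quotient.mk_eq_zero K
  induction I using WellFoundedGT.induction with
  | ind I ih =>
  by_cases hT : I = ⊤
  · subst hT
    have : Subsingleton (R ⧸ (⊤ : Ideal R)) := Ideal.Quotient.subsingleton_iff.2 rfl
    exact thick_summand h 0 0 (fun b => Subsingleton.elim _ _) hk
  by_cases hI : I.IsPrime
  · by_cases hm : I = maximalIdeal R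
    · exact hm ▸ hk
    obtain ⟨n, hn⟩ := localized_residue_pd R I (hiso I hm)
    let π : (Fin 1 → R) →ₗ[R] (R ⧸ I) := I.mkQ.comp (LinearMap.proj 0)
    have hπ : Function.Surjective π := (Submodule.mkQ_surjective I).comp
      (fun x => ⟨fun _ => x, rfl⟩)
    refine mem_of_pullback h hfree I n (R ⧸ I) 1 π hπ hn (fun a ha => ?_)
    have hlt : I < I ⊔ Ideal.span {a} := by
      refine lt_of_le_of_ne le_sup_left (fun he => ha ?_)
      rw [he]
      exact (le_sup_right : _ ≤ I ⊔ Ideal.span {a}) (Ideal.mem_span_singleton_self a)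
    -- `a` is regular on `R ⧸ I`, so the first projection identifies the pullback with the kernel
    -- of `R → R ⧸ (I + (a))`
    refine thick_left h
      ((LinearMap.fst R _ (R ⧸ I)).comp (pullbackSMul π a).subtype)
      ((I ⊔ Ideal.span {a}).mkQ.comp (LinearMap.proj 0)) ?_
      ((Submodule.mkQ_surjective _).comp (fun x => ⟨fun _ => x, rfl⟩)) ?_ (hfree 1) (ih _ hlt)
    · rw [← LinearMap.ker_eq_bot, LinearMap.ker_eq_bot']
      rintro ⟨⟨f, x⟩, hz⟩ hf
      have hf0 : f = 0 := hf
      subst hf0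
      rw [mem_pullbackSMul] at hz
      obtain ⟨y, rfl⟩ := Submodule.mkQ_surjective I x
      have hz' : π 0 = a • I.mkQ y := hz
      rw [map_zero, ← map_smul, eq_comm, hmk] at hz'
      have : a * y ∈ I := hz'
      have hy := (hI.mem_or_mem this).resolve_left ha
      rw [← hmk] at hy
      apply Subtype.ext
      exact Prod.ext rfl hy
    · ext f
      rw [LinearMap.mem_ker, LinearMap.mem_range]
      simp only [LinearMap.comp_apply, LinearMap.proj_apply, Submodule.mkQ_apply,
        Submodule.Quotient.mk_eq_zero, Submodule.mem_sup, Ideal.mem_span_singleton]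
      constructor
      · rintro ⟨y, hy, _, ⟨c, rfl⟩, hyz⟩
        refine ⟨⟨(f, I.mkQ c), ?_⟩, rfl⟩
        rw [mem_pullbackSMul]
        change I.mkQ (f 0) = a • I.mkQ c
        rw [← map_smul, ← sub_eq_zero, ← map_sub, hmk]
        simpa [← hyz] using hy
      · rintro ⟨⟨⟨f', x⟩, hz⟩, hff⟩
        have : f' = f := hff
        subst this
        rw [mem_pullbackSMul] at hz
        obtain ⟨c, rfl⟩ := Submodule.mkQ_surjective I x
        refine ⟨f' 0 - a * c, ?_, a * c, ⟨c, rfl⟩, by ring⟩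
        have hz' : I.mkQ (f' 0) = a • I.mkQ c := hz
        rw [← map_smul, ← sub_eq_zero, ← map_sub, hmk] at hz'
        exact hz'
  · obtain ⟨a, ha, b, hb, hab⟩ : ∃ a ∉ I, ∃ b ∉ I, a * b ∈ I := by
      rw [Ideal.isPrime_iff] at hI
      push Not at hI
      obtain ⟨a, b, h1, h2, h3⟩ := hI hT
      exact ⟨a, h2, b, h3, h1⟩
    -- the exact sequence `0 → R ⧸ (I : a) → R ⧸ I → R ⧸ (I + (a)) → 0`
    let J : Ideal R := Submodule.comap (LinearMap.mulLeft R a) I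
    have hJ : ∀ y, y ∈ J ↔ a * y ∈ I := fun y => Iff.rfl
    have hIJ : I < J := by
      refine lt_of_le_of_ne (fun y hy => I.mul_mem_left a hy) (fun he => hb ?_)
      rw [he]
      exact hab
    have hlt : I < I ⊔ Ideal.span {a} := by
      refine lt_of_le_of_ne le_sup_left (fun he => ha ?_)
      rw [he]
      exact (le_sup_right : _ ≤ I ⊔ Ideal.span {a}) (Ideal.mem_span_singleton_self a)
    refine thick_mid h (Submodule.mapQ J I (LinearMap.mulLeft R a) le_rfl)
      (Submodule.factor (le_sup_left : I ≤ I ⊔ Ideal.span {a})) ?_ (Submodule.factor_surjective _)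
      ?_ (ih _ hIJ) (ih _ hlt)
    · rw [← LinearMap.ker_eq_bot, LinearMap.ker_eq_bot']
      intro x hx
      obtain ⟨y, rfl⟩ := Submodule.mkQ_surjective J x
      have hx' : I.mkQ (a * y) = 0 := hx
      rw [hmk] at hx' ⊢
      exact hx'
    · ext x
      obtain ⟨y, rfl⟩ := Submodule.mkQ_surjective I x
      rw [LinearMap.mem_ker, LinearMap.mem_range]
      change (I ⊔ Ideal.span {a}).mkQ y = 0 ↔ _
      rw [hmk]
      simp only [Submodule.mem_sup, Ideal.mem_span_singleton]
      constructor
      · rintro ⟨z, hz, _, ⟨c, rfl⟩, rfl⟩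
        refine ⟨J.mkQ c, ?_⟩
        change I.mkQ (a * c) = I.mkQ (z + a * c)
        rw [map_add, (hmk I z).2 hz, zero_add]
      · rintro ⟨x, hx⟩
        obtain ⟨c, rfl⟩ := Submodule.mkQ_surjective J x
        have hx' : I.mkQ (a * c) = I.mkQ y := hx
        refine ⟨y - a * c, ?_, a * c, ⟨c, rfl⟩, by ring⟩
        rw [← hmk, map_sub, hx', sub_self]

theorem finite_mem [IsNoetherianRing R] [IsLocalRing R] (h : IsThickSubcat R P)
    (hiso : HasIsolatedSingularity R) (hfree : ∀ n : ℕ, P (ModuleCat.of R (Fin n → R)))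
    (hk : P (ModuleCat.of R (R ⧸ maximalIdeal R))) (M : Type u) [AddCommGroup M] [Module R M]
    (hM : Module.Finite R M) : P (ModuleCat.of R M) := by
  induction hM using IsNoetherianRing.induction_on_isQuotientEquivQuotientPrime R with
  | subsingleton N => exact thick_summand h 0 0 (fun b => Subsingleton.elim _ _) hk
  | quotient N p e => exact thick_equiv h e.symm (quotient_mem h hiso hfree hk p.1)
  | exact N₁ N₂ N₃ f g hf hg hfg h₁ h₃ =>
    exact thick_mid h f g hf hg hfg.linearMap_ker_eq h₁ h₃

end Generation

/-! ### Reduction modulo regular elements -/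

section RegularElements

variable {R : Type u} [CommRing R] {P : ModuleCat.{u} R → Prop}

open scoped Pointwise in
theorem mem_smul_top_iff {M : Type u} [AddCommGroup M] [Module R M] (a : R) (y : M) :
    (a • (⊤ : Submodule R M)).mkQ y = 0 ↔ ∃ z, a • z = y := by
  rw [Submodule.mkQ_apply, Submodule.Quotient.mk_eq_zero, Submodule.mem_smul_pointwise_iff_exists]
  simp

theorem regular_of_injective {N F : Type u} [AddCommGroup N] [Module R N] [AddCommGroup F]
    [Module R F] {r : ℕ} (f : N →ₗ[R] (Fin r → F)) (hf : Function.Injective f) {a : R}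
    (ha : IsSMulRegular F a) : IsSMulRegular N a := by
  intro x y hxy
  apply hf
  funext i
  apply ha
  have := congrArg (fun z => f z i) hxy
  simpa using this

open scoped Pointwise in
theorem thick_quotSMulTop (h : IsThickSubcat R P) {N : Type u} [AddCommGroup N] [Module R N]
    {a : R} (ha : IsSMulRegular N a) (hN : P (ModuleCat.of R N)) :
    P (ModuleCat.of R (QuotSMulTop a N)) := by
  refine thick_right h (LinearMap.lsmul R N a) (a • (⊤ : Submodule R N)).mkQ ha
    (Submodule.mkQ_surjective _) ?_ hN hN
  ext y
  rw [LinearMap.mem_ker, mem_smul_top_iff]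
  rfl

end RegularElements

/-! ### Minimal resolutions -/

section MinimalCovers

open scoped Pointwise

variable {R : Type u} [CommRing R] [IsLocalRing R] {P : ModuleCat.{u} R → Prop}

/-- A finite module over a local ring has generators all of whose relations have coefficients in
the maximal ideal: any generating family of minimal length will do. -/
theorem exists_minimal_generators (M : Type u) [AddCommGroup M] [Module R M] [Module.Finite R M] :
    ∃ (r : ℕ) (v : Fin r → M), Submodule.span R (Set.range v) = ⊤ ∧
      ∀ c : Fin r → R, ∑ i, c i • v i = 0 → ∀ i, c i ∈ maximalIdeal R := by
  classical
  have hex : ∃ (r : ℕ) (v : Fin r → M), Submodule.span R (Set.range v) = ⊤ :=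
    Module.Finite.exists_fin
  obtain ⟨v, hv⟩ := Nat.find_spec hex
  have hmin := fun k (hk : k < Nat.find hex) => Nat.find_min hex hk
  generalize Nat.find hex = r at v hv hmin
  refine ⟨r, v, hv, fun c hc i => ?_⟩
  by_contra hi
  have hu : IsUnit (c i) := by simpa using hi
  obtain ⟨w, hw⟩ := hu
  cases r with
  | zero => exact i.elim0
  | succ r =>
    apply hmin r (Nat.lt_succ_self r)
    refine ⟨fun j => v (i.succAbove j), ?_⟩
    rw [eq_top_iff, ← hv, Submodule.span_le]
    rintro _ ⟨k, rfl⟩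
    rcases eq_or_ne k i with rfl | hk
    · rw [Fin.sum_univ_succAbove _ k] at hc
      have h1 : v k = (↑w⁻¹ : R) • (- ∑ j, c (k.succAbove j) • v (k.succAbove j)) := by
        rw [← eq_neg_iff_add_eq_zero.2 hc, ← hw, smul_smul]
        simp
      rw [h1]
      refine Submodule.smul_mem _ _ (Submodule.neg_mem _ (Submodule.sum_mem _ (fun j _ => ?_)))
      exact Submodule.smul_mem _ _ (Submodule.subset_span ⟨j, rfl⟩)
    · obtain ⟨j, rfl⟩ := Fin.exists_succAbove_eq hk
      exact Submodule.subset_span ⟨j, rfl⟩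

theorem mem_smul_top_pi {r : ℕ} (v : Fin r → R) (hv : ∀ i, v i ∈ maximalIdeal R) :
    v ∈ maximalIdeal R • (⊤ : Submodule R (Fin r → R)) := by
  classical
  rw [pi_eq_sum_univ' v]
  exact Submodule.sum_mem _ (fun i _ => Submodule.smul_mem_smul (hv i) trivial)

theorem projDimLE_free (n : ℕ) : ProjDimLE R (Fin n → R) 0 := by
  refine ⟨⟨fun i => match i with | 0 => n | _ + 1 => 0, LinearMap.id, fun _ => 0,
    fun x => ⟨x, rfl⟩, ?_, ?_, ?_⟩, ?_⟩
  · simp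
  · intro i
    rw [LinearMap.range_zero, eq_bot_iff]
    intro x _
    exact Subsingleton.elim (α := Fin 0 → R) x 0
  · intro i
    simp
  · intro i hi
    cases i with
    | zero => exact absurd hi (lt_irrefl _)
    | succ i => rfl

theorem projDimLE_of_subsingleton (M : Type u) [AddCommGroup M] [Module R M] [Subsingleton M] :
    ProjDimLE R M 0 := by
  refine ⟨⟨fun _ => 0, 0, fun _ => 0, fun x => ⟨0, Subsingleton.elim _ _⟩, ?_, ?_, ?_⟩,
    fun i hi => rfl⟩
  · exact Subsingleton.elim _ _
  · exact fun i => Subsingleton.elim _ _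
  · intro i
    simp

/-- Splicing a minimal free cover of `M` with a minimal free resolution of its kernel. -/
theorem projDimLE_of_ker {M : Type u} [AddCommGroup M] [Module R M] {r n : ℕ}
    (g : (Fin r → R) →ₗ[R] M) (hg : Function.Surjective g)
    (hmin : ∀ v ∈ LinearMap.ker g, ∀ i, v i ∈ maximalIdeal R)
    (h : ProjDimLE R (LinearMap.ker g) n) : ProjDimLE R M (n + 1) := by
  obtain ⟨F, hF⟩ := h
  have hrange : LinearMap.range ((LinearMap.ker g).subtype.comp F.aug) = LinearMap.ker g := by
    rw [LinearMap.range_comp, LinearMap.range_eq_top.2 F.aug_surjective]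
    simp
  refine ⟨⟨fun i => match i with | 0 => r | i + 1 => F.rank i, g,
    fun i => match i with | 0 => (LinearMap.ker g).subtype.comp F.aug | i + 1 => F.d i,
    hg, hrange.symm, ?_, ?_⟩, ?_⟩
  · intro i
    cases i with
    | zero =>
      change LinearMap.ker ((LinearMap.ker g).subtype.comp F.aug) = LinearMap.range (F.d 0)
      rw [LinearMap.ker_comp, Submodule.ker_subtype, ← F.exact_aug]
      rfl
    | succ i => exact F.exact i
  · intro i
    cases i with
    | zero =>
      change LinearMap.range ((LinearMap.ker g).subtype.comp F.aug) ≤ _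
      rw [hrange]
      exact fun v hv => mem_smul_top_pi v (hmin v hv)
    | succ i => exact F.minimal i
  · intro i hi
    cases i with
    | zero => exact absurd hi (Nat.not_lt_zero _)
    | succ i => exact hF i (Nat.lt_of_succ_lt_succ hi)

/-- `Long R S n N`: there are `n` steps of a resolution of `N` by finite powers of `S`, minimal in
the sense that each syzygy lies in `𝔪` times the power of `S` containing it, and with nonzero
`n`-th syzygy. In use `S` is a quotient ring of `R`, treated as an `R`-module. -/
def Long (R : Type u) [CommRing R] [IsLocalRing R] (S : Type u) [AddCommGroup S] [Module R S] :
    ℕ → ∀ (N : Type u) [AddCommGroup N] [Module R N], Prop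
  | 0, N, _, _ => Nontrivial N
  | n + 1, N, _, _ => ∃ (r : ℕ) (N₁ : Type u) (_ : AddCommGroup N₁) (_ : Module R N₁)
      (f : N₁ →ₗ[R] (Fin r → S)) (g : (Fin r → S) →ₗ[R] N),
      Function.Injective f ∧ Function.Surjective g ∧ LinearMap.ker g = LinearMap.range f ∧
      (∀ z i, f z i ∈ maximalIdeal R • (⊤ : Submodule R S)) ∧ Long R S n N₁

/-- The syzygies of a module of infinite projective dimension never vanish. -/
theorem long_of_infinite_pd [IsNoetherianRing R] (n : ℕ) :
    ∀ (A : Type u) [AddCommGroup A] [Module R A] [Module.Finite R A],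
      (¬ ∃ n : ℕ, ProjDimLE R A n) → Long R R n A := by
  induction n with
  | zero =>
    intro A _ _ _ hA
    rw [Long]
    by_contra hN
    rw [not_nontrivial_iff_subsingleton] at hN
    exact hA ⟨0, projDimLE_of_subsingleton A⟩
  | succ n ih =>
    intro A _ _ _ hA
    obtain ⟨r, v, hv, hmin⟩ := exists_minimal_generators (R := R) A
    let g : (Fin r → R) →ₗ[R] A := Fintype.linearCombination R v
    have hg : Function.Surjective g := by
      rw [← LinearMap.range_eq_top, Fintype.range_linearCombination, hv]
    have hmin₁ : ∀ w ∈ LinearMap.ker g, ∀ i, w i ∈ maximalIdeal R := by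
      intro w hw
      exact hmin w (by simpa [g, Fintype.linearCombination_apply] using hw)
    refine ⟨r, LinearMap.ker g, inferInstance, inferInstance, (LinearMap.ker g).subtype, g,
      Subtype.val_injective, hg, by simp, ?_, ?_⟩
    · intro z i
      have := hmin₁ z z.2 i
      simpa using this
    · apply ih
      rintro ⟨k, hk⟩
      exact hA ⟨k + 1, projDimLE_of_ker g hg hmin₁ hk⟩

/-- If `a ∈ 𝔪` is regular on `S` and on `N`, then reduction modulo `a` turns a minimal `S`-resolution
of `N` into a minimal `S ⧸ aS`-resolution of `N ⧸ aN`; its syzygies stay nonzero by Nakayama. -/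
theorem long_quot [IsNoetherianRing R] {S : Type u} [AddCommGroup S] [Module R S]
    [Module.Finite R S] {a : R} (ha : a ∈ maximalIdeal R) (haS : IsSMulRegular S a) (n : ℕ) :
    ∀ (N : Type u) [AddCommGroup N] [Module R N] [Module.Finite R N], IsSMulRegular N a →
      Long R S n N → Long R (QuotSMulTop a S) n (QuotSMulTop a N) := by
  induction n with
  | zero =>
    intro N _ _ _ haN hN
    rw [Long] at hN ⊢
    rw [Submodule.Quotient.nontrivial_iff]
    intro htop
    have h1 : (⊤ : Submodule R N) ≤ maximalIdeal R • (⊤ : Submodule R N) := by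
      intro y hy
      rw [← htop] at hy
      obtain ⟨z, -, rfl⟩ := (Submodule.mem_smul_pointwise_iff_exists _ _ _).1 hy
      exact Submodule.smul_mem_smul ha trivial
    have := Submodule.eq_bot_of_le_smul_of_le_jacobson_bot (maximalIdeal R) (⊤ : Submodule R N)
      Module.Finite.fg_top h1 (IsLocalRing.maximalIdeal_le_jacobson _)
    exact top_ne_bot this
  | succ n ih =>
    rintro N _ _ _ haN ⟨r, N', _, _, f, g, hf, hg, hex, hmin, hlong⟩
    have haN' := regular_of_injective f hf haS
    have : Module.Finite R N' := Module.Finite.of_injective f hf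
    have hgf : ∀ v, g v = 0 ↔ ∃ z, f z = v := fun v => by
      rw [← LinearMap.mem_ker, hex, LinearMap.mem_range]
    let q := (a • (⊤ : Submodule R S)).mkQ
    have hq : ∀ y, q y = 0 ↔ ∃ z, a • z = y := mem_smul_top_iff a
    have hqs : Function.Surjective q := Submodule.mkQ_surjective _
    let qN := (a • (⊤ : Submodule R N)).mkQ
    have hqN : ∀ y, qN y = 0 ↔ ∃ z, a • z = y := mem_smul_top_iff a
    let qN' := (a • (⊤ : Submodule R N')).mkQ
    have hqN' : ∀ y, qN' y = 0 ↔ ∃ z, a • z = y := mem_smul_top_iff a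
    let F : QuotSMulTop a N' →ₗ[R] (Fin r → QuotSMulTop a S) :=
      Submodule.liftQ _ ((q.compLeft (Fin r)).comp f) (by
        intro y hy
        obtain ⟨z, -, rfl⟩ := (Submodule.mem_smul_pointwise_iff_exists _ _ _).1 hy
        rw [LinearMap.mem_ker]
        funext i
        change q (f (a • z) i) = 0
        rw [hq, map_smul]
        exact ⟨_, rfl⟩)
    have hF : ∀ z i, F (qN' z) i = q (f z i) := fun z i => rfl
    have hs : ∀ i : Fin r, a • (⊤ : Submodule R S) ≤
        LinearMap.ker (qN.comp (g.comp (LinearMap.single R (fun _ => S) i))) := by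
      intro i y hy
      obtain ⟨z, -, rfl⟩ := (Submodule.mem_smul_pointwise_iff_exists _ _ _).1 hy
      rw [LinearMap.mem_ker, LinearMap.map_smul, LinearMap.comp_apply, ← LinearMap.map_smul, hqN]
      exact ⟨_, rfl⟩
    let G : (Fin r → QuotSMulTop a S) →ₗ[R] QuotSMulTop a N :=
      ∑ i, (Submodule.liftQ _ _ (hs i)).comp (LinearMap.proj i)
    have hG : ∀ v : Fin r → S, G (fun i => q (v i)) = qN (g v) := by
      intro v
      have hv : v = ∑ i, Pi.single i (v i) := (Finset.univ_sum_single v).symm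
      conv_rhs => rw [hv, map_sum, map_sum]
      simp only [G, LinearMap.sum_apply]
      rfl
    have hlift : ∀ w : Fin r → QuotSMulTop a S, ∃ v : Fin r → S, w = fun i => q (v i) := by
      intro w
      choose v hv using fun i => hqs (w i)
      exact ⟨v, funext fun i => (hv i).symm⟩
    refine ⟨r, QuotSMulTop a N', inferInstance, inferInstance, F, G, ?_, ?_, ?_, ?_,
      ih N' haN' hlong⟩
    · rw [← LinearMap.ker_eq_bot, LinearMap.ker_eq_bot']
      intro x hx
      obtain ⟨z, rfl⟩ := Submodule.mkQ_surjective _ x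
      have h1 : ∀ i, ∃ y, a • y = f z i := fun i => by
        rw [← hq, ← hF]
        exact congrFun hx i
      choose w hw using h1
      have hw' : a • w = f z := funext hw
      have h2 : a • g w = a • (0 : N) := by
        rw [← map_smul, hw', smul_zero, hgf]
        exact ⟨z, rfl⟩
      obtain ⟨z', hz'⟩ := (hgf w).1 (haN h2)
      rw [mem_smul_top_iff]
      refine ⟨z', hf ?_⟩
      rw [map_smul, hz', hw']
    · intro y
      obtain ⟨y, rfl⟩ := Submodule.mkQ_surjective _ y
      obtain ⟨v, rfl⟩ := hg y
      exact ⟨_, hG v⟩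
    · ext w
      obtain ⟨v, rfl⟩ := hlift w
      rw [LinearMap.mem_ker, LinearMap.mem_range, hG, hqN]
      constructor
      · rintro ⟨y, hy⟩
        obtain ⟨w, rfl⟩ := hg y
        have h1 : g (v - a • w) = 0 := by rw [map_sub, map_smul, hy, sub_self]
        obtain ⟨z, hz⟩ := (hgf _).1 h1
        refine ⟨qN' z, funext fun i => ?_⟩
        rw [hF, hz, ← sub_eq_zero, ← map_sub, hq]
        exact ⟨-(w i), by simp⟩
      · rintro ⟨x, hx⟩
        obtain ⟨z, rfl⟩ := Submodule.mkQ_surjective _ x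
        have h1 : ∀ i, ∃ y, a • y = v i - f z i := fun i => by
          rw [← hq, map_sub, ← hF, sub_eq_zero]
          exact (congrFun hx i).symm
        choose w hw using h1
        have hw' : v = a • w + f z := by
          funext i
          simp [hw]
        refine ⟨g w, ?_⟩
        rw [hw', map_add, (hgf (f z)).2 ⟨z, rfl⟩, map_smul, add_zero]
    · intro x i
      obtain ⟨z, rfl⟩ := Submodule.mkQ_surjective _ x
      have h1 := Submodule.mem_map_of_mem (f := q) (hmin z i)
      rw [Submodule.map_smul''] at h1
      exact Submodule.smul_mono le_rfl le_top h1

/-- Reduction along a whole regular sequence `x`. Each element of `x` costs one syzygy, which is why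
the hypothesis provides modules with nonvanishing syzygies of every order. -/
theorem exists_long_quotient [IsNoetherianRing R] (h : IsThickSubcat R P) (x : List R) :
    ∀ (S : Type u) [AddCommGroup S] [Module R S], (∀ a ∈ x, a ∈ maximalIdeal R) →
      RingTheory.Sequence.IsWeaklyRegular S x → P (ModuleCat.of R S) →
      (∀ n : ℕ, ∃ (N : Type u) (_ : AddCommGroup N) (_ : Module R N),
        P (ModuleCat.of R N) ∧ Long R S n N) →
      ∃ (S' : Type u) (_ : AddCommGroup S') (_ : Module R S'),
        Nonempty ((S ⧸ (Ideal.ofList x • ⊤ : Submodule R S)) ≃ₗ[R] S') ∧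
        P (ModuleCat.of R S') ∧ ∃ (N : Type u) (_ : AddCommGroup N) (_ : Module R N),
        P (ModuleCat.of R N) ∧ Long R S' 2 N := by
  induction x with
  | nil =>
    intro S _ _ _ _ hS hN
    exact ⟨S, inferInstance, inferInstance, ⟨Submodule.quotEquivOfEqBot _ (by simp)⟩, hS, hN 2⟩
  | cons a x ih =>
    intro S _ _ hx hreg hS hN
    rw [RingTheory.Sequence.isWeaklyRegular_cons_iff] at hreg
    have : Module.Finite R S := h.fg _ hS
    obtain ⟨S', i1, i2, ⟨e⟩, h1, h2⟩ := ih (QuotSMulTop a S)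
      (fun b hb => hx b (List.mem_cons_of_mem _ hb)) hreg.2 (thick_quotSMulTop h hreg.1 hS) (by
        intro n
        obtain ⟨N, _, _, hPN, r, N', _, _, f, g, hf, hg, hex, hmin, hlong⟩ := hN (n + 1)
        have hPN' : P (ModuleCat.of R N') := thick_left h f g hf hg hex (thick_pi h hS r) hPN
        have : Module.Finite R N' := h.fg _ hPN'
        have haN' := regular_of_injective f hf hreg.1
        exact ⟨QuotSMulTop a N', inferInstance, inferInstance, thick_quotSMulTop h haN' hPN',
          long_quot (hx a List.mem_cons_self) hreg.1 n N' haN' hlong⟩)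
    exact ⟨S', i1, i2,
      ⟨(Submodule.quotOfListConsSMulTopEquivQuotSMulTopInner S a x).trans e⟩, h1, h2⟩

end MinimalCovers

/-! ### Decomposable maximal ideal -/

section Decomposable

variable {R : Type u} [CommRing R] {P : ModuleCat.{u} R → Prop}

theorem exists_map_of_cyclic {S U : Type u} [AddCommGroup S] [Module R S] [AddCommGroup U]
    [Module R U] {e : S} (he : ∀ s, ∃ r : R, r • e = s) (w : U)
    (hw : ∀ r : R, r • e = 0 → r • w = 0) : ∃ φ : S →ₗ[R] U, φ e = w := by
  let t := LinearMap.toSpanSingleton R S e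
  have ht : Function.Surjective t := fun s => by simpa [t] using he s
  refine ⟨((LinearMap.ker t).liftQ (LinearMap.toSpanSingleton R U w) (fun r hr => ?_)).comp
    (t.quotKerEquivOfSurjective ht).symm.toLinearMap, ?_⟩
  · simpa using hw r (by simpa [t] using hr)
  · have h1 : (t.quotKerEquivOfSurjective ht).symm e = (LinearMap.ker t).mkQ 1 := by
      rw [LinearEquiv.symm_apply_eq]
      exact (one_smul R e).symm
    rw [LinearMap.comp_apply, LinearEquiv.coe_coe, h1]
    exact one_smul R w

theorem map_mem_of_cyclic {S : Type u} [AddCommGroup S] [Module R S] {e : S}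
    (he : ∀ s, ∃ r : R, r • e = s) (φ : S →ₗ[R] S) (I : Submodule R S) {s : S} (hs : s ∈ I) :
    φ s ∈ I := by
  obtain ⟨r, rfl⟩ := he s
  obtain ⟨c, hc⟩ := he (φ e)
  rw [map_smul, ← hc, smul_comm]
  exact I.smul_mem c hs

/-- For a cyclic module `S` generated by `e`, viewed as a quotient ring of `R` with unit `e`: if
`I ∩ J = 0`, then `I J = 0`. -/
theorem smul_eq_zero_of_cyclic {S : Type u} [AddCommGroup S] [Module R S] {e : S}
    (he : ∀ s, ∃ r : R, r • e = s) {I J : Submodule R S} (hIJ : I ⊓ J = ⊥) {r : R}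
    (hr : r • e ∈ J) {s : S} (hs : s ∈ I) : r • s = 0 := by
  have h1 : r • s ∈ I ⊓ J := by
    refine ⟨I.smul_mem r hs, ?_⟩
    obtain ⟨c, rfl⟩ := he s
    rw [smul_comm]
    exact J.smul_mem c hr
  rwa [hIJ, Submodule.mem_bot] at h1

theorem exists_prod_equiv {S : Type u} [AddCommGroup S] [Module R S] {I J W : Submodule R S}
    (hIJ : I ⊓ J = ⊥) (hW : I ⊔ J = W) :
    ∃ E : (I × J) ≃ₗ[R] W, ∀ z, (E z : S) = z.1 + z.2 := by
  let f : (I × J) →ₗ[R] S := LinearMap.coprod I.subtype J.subtype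
  have hf : Function.Injective f := by
    rw [← LinearMap.ker_eq_bot, LinearMap.ker_eq_bot']
    rintro ⟨x, y⟩ hxy
    have h0 : (x : S) + y = 0 := hxy
    have hx : (x : S) ∈ I ⊓ J := by
      refine ⟨x.2, ?_⟩
      rw [eq_neg_of_add_eq_zero_left h0]
      exact J.neg_mem y.2
    rw [hIJ, Submodule.mem_bot] at hx
    rw [hx, zero_add] at h0
    exact Prod.ext (Subtype.ext hx) (Subtype.ext h0)
  have hr : LinearMap.range f = W := by
    rw [← hW, LinearMap.range_coprod]
    simp
  exact ⟨(LinearEquiv.ofInjective f hf).trans (LinearEquiv.ofEq _ _ hr), fun z => rfl⟩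

/-- The projection of `W = I ⊕ J` onto `J`. -/
theorem exists_proj {S : Type u} [AddCommGroup S] [Module R S] {I J W : Submodule R S}
    (hIJ : I ⊓ J = ⊥) (hW : I ⊔ J = W) :
    ∃ π : W →ₗ[R] J, ∀ w : W, (w : S) ∈ J → (π w : S) = w := by
  obtain ⟨E, hE⟩ := exists_prod_equiv hIJ hW
  refine ⟨(LinearMap.snd R I J).comp E.symm.toLinearMap, fun w hw => ?_⟩
  have h1 : E.symm w = (0, ⟨(w : S), hw⟩) := by
    rw [LinearEquiv.symm_apply_eq]
    apply Subtype.ext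
    simp [hE]
  simp [h1]

variable [IsLocalRing R]

/-- Let `S`, generated by `e`, be a cyclic module with `𝔪 S = I ⊕ J`, and let `U ≠ 0` be annihilated by
`J`, in the sense of `hkill`. The kernel of a minimal `S`-cover `S ^ r → U` lies in `(𝔪 S) ^ r` and
contains `J ^ r`, hence has `J` as a direct summand. -/
theorem summand_mem_of_killed (h : IsThickSubcat R P) {S : Type u} [AddCommGroup S] [Module R S]
    {e : S} (he : ∀ s, ∃ r : R, r • e = s) {I J : Submodule R S} (hIJ : I ⊓ J = ⊥)
    (hm : I ⊔ J = maximalIdeal R • ⊤) (hS : P (ModuleCat.of R S))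
    (U : Type u) [AddCommGroup U] [Module R U] [Nontrivial U] (hU : P (ModuleCat.of R U))
    (hkill : ∀ r : R, r • e ∈ J → ∀ w : U, r • w = 0) : P (ModuleCat.of R J) := by
  have : Module.Finite R U := h.fg _ hU
  obtain ⟨r, v, hv, hmin⟩ := exists_minimal_generators (R := R) U
  choose φ hφ using fun i => exists_map_of_cyclic he (v i)
    (fun r hr => hkill r (by rw [hr]; exact J.zero_mem) (v i))
  let g : (Fin r → S) →ₗ[R] U := ∑ i, (φ i).comp (LinearMap.proj i)
  have hgc : ∀ c : Fin r → R, g (fun i => c i • e) = ∑ i, c i • v i := by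
    intro c
    simp [g, LinearMap.sum_apply, hφ]
  have hg : Function.Surjective g := by
    intro w
    have hw : w ∈ Submodule.span R (Set.range v) := hv ▸ trivial
    obtain ⟨c, hc⟩ := (Submodule.mem_span_range_iff_exists_fun R).1 hw
    exact ⟨_, (hgc c).trans hc⟩
  have hK : P (ModuleCat.of R (LinearMap.ker g)) := thick_ker h g hg (thick_pi h hS r) hU
  have hKm : ∀ w ∈ LinearMap.ker g, ∀ i, w i ∈ maximalIdeal R • (⊤ : Submodule R S) := by
    intro w hw i
    choose c hc using fun i => he (w i)
    have hw' : w = fun i => c i • e := funext fun i => (hc i).symm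
    rw [LinearMap.mem_ker, hw', hgc] at hw
    rw [← hc i]
    exact Submodule.smul_mem_smul (hmin c hw i) trivial
  have hr : 0 < r := by
    rcases Nat.eq_zero_or_pos r with rfl | hr
    · exfalso
      rw [Set.range_eq_empty, Submodule.span_empty] at hv
      exact bot_ne_top hv
    · exact hr
  obtain ⟨π, hπ⟩ := exists_proj hIJ hm
  let i₀ : Fin r := ⟨0, hr⟩
  have hsing : ∀ j : J, LinearMap.single R (fun _ : Fin r => S) i₀ j ∈ LinearMap.ker g := by
    intro j
    obtain ⟨c, hc⟩ := he j
    have h1 : (LinearMap.single R (fun _ : Fin r => S) i₀ j) =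
        fun i => (Pi.single i₀ c : Fin r → R) i • e := by
      funext i
      rcases eq_or_ne i i₀ with rfl | hi
      · simp [hc]
      · simp [hi]
    rw [LinearMap.mem_ker, h1, hgc]
    refine Finset.sum_eq_zero (fun i _ => ?_)
    rcases eq_or_ne i i₀ with rfl | hi
    · rw [Pi.single_eq_same]
      exact hkill c (hc ▸ j.2) _
    · simp [hi]
  refine thick_summand h
    (LinearMap.codRestrict (LinearMap.ker g)
      ((LinearMap.single R (fun _ : Fin r => S) i₀).comp J.subtype) hsing)
    (π.comp (LinearMap.codRestrict (maximalIdeal R • (⊤ : Submodule R S))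
      ((LinearMap.proj i₀).comp (LinearMap.ker g).subtype) (fun w => hKm w w.2 i₀)))
    (fun j => ?_) hK
  apply Subtype.ext
  rw [LinearMap.comp_apply, hπ]
  · exact Pi.single_eq_same (M := fun _ => S) i₀ (j : S)
  · have h1 := Pi.single_eq_same (M := fun _ : Fin r => S) i₀ (j : S)
    exact h1.symm ▸ j.2

/-- If `𝔪 S = I ⊕ J` with `I` and `J` in the thick subcategory, so is the residue field, being
`S ⧸ 𝔪 S`. -/
theorem residue_mem [IsNoetherianRing R] (h : IsThickSubcat R P) {S : Type u} [AddCommGroup S]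
    [Module R S] {e : S} (he : ∀ s, ∃ r : R, r • e = s) {I J : Submodule R S} (hIJ : I ⊓ J = ⊥)
    (hm : I ⊔ J = maximalIdeal R • ⊤) (hI : I ≠ ⊥) (hS : P (ModuleCat.of R S))
    (hPI : P (ModuleCat.of R I)) (hPJ : P (ModuleCat.of R J)) :
    P (ModuleCat.of R (R ⧸ maximalIdeal R)) := by
  have : Module.Finite R S := h.fg _ hS
  obtain ⟨E, -⟩ := exists_prod_equiv hIJ hm
  have hmS : P (ModuleCat.of R (maximalIdeal R • (⊤ : Submodule R S) : Submodule R S)) :=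
    thick_equiv h E (thick_mid h (LinearMap.inl R I J) (LinearMap.snd R I J)
      LinearMap.inl_injective LinearMap.snd_surjective (LinearMap.range_inl R I J).symm hPI hPJ)
  have hSm := thick_right h (maximalIdeal R • (⊤ : Submodule R S)).subtype
    (maximalIdeal R • (⊤ : Submodule R S)).mkQ Subtype.val_injective (Submodule.mkQ_surjective _)
    (by simp) hmS hS
  let t : R →ₗ[R] (S ⧸ maximalIdeal R • (⊤ : Submodule R S)) :=
    (maximalIdeal R • (⊤ : Submodule R S)).mkQ.comp (LinearMap.toSpanSingleton R S e)
  have ht : Function.Surjective t :=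
    (Submodule.mkQ_surjective _).comp (fun s => by simpa using he s)
  have hkt : LinearMap.ker t = maximalIdeal R := by
    symm
    refine (IsLocalRing.maximalIdeal.isMaximal R).eq_of_le ?_ ?_
    · intro htop
      have hz : ∀ y, y = (0 : S ⧸ maximalIdeal R • (⊤ : Submodule R S)) := by
        intro y
        obtain ⟨r, rfl⟩ := ht y
        have : r ∈ LinearMap.ker t := htop ▸ trivial
        exact this
      have h1 : (⊤ : Submodule R S) ≤ maximalIdeal R • (⊤ : Submodule R S) := by
        intro s _
        exact (Submodule.Quotient.mk_eq_zero _).1 (hz (Submodule.Quotient.mk s))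
      have h2 := Submodule.eq_bot_of_le_smul_of_le_jacobson_bot (maximalIdeal R)
        (⊤ : Submodule R S) Module.Finite.fg_top h1 (IsLocalRing.maximalIdeal_le_jacobson _)
      exact hI (eq_bot_iff.2 (h2 ▸ le_top))
    · intro r hr
      rw [LinearMap.mem_ker]
      exact (Submodule.Quotient.mk_eq_zero _).2 (Submodule.smul_mem_smul hr trivial)
  exact thick_equiv h ((t.quotKerEquivOfSurjective ht).symm.trans
    (Submodule.quotEquivOfEq _ _ hkt)) hSm

/-- The second `S`-syzygy of `N` splits into a part inside a power of `I` and a part inside a power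
of `J`; whichever is nonzero puts `I` or `J` in the thick subcategory. -/
theorem residue_mem_of_long [IsNoetherianRing R] (h : IsThickSubcat R P) {S : Type u}
    [AddCommGroup S] [Module R S] {e : S} (he : ∀ s, ∃ r : R, r • e = s) {I J : Submodule R S}
    (hIJ : I ⊓ J = ⊥) (hm : I ⊔ J = maximalIdeal R • ⊤) (hI : I ≠ ⊥) (hJ : J ≠ ⊥)
    (hS : P (ModuleCat.of R S)) (N : Type u) [AddCommGroup N] [Module R N]
    (hN : P (ModuleCat.of R N)) (hlong : Long R S 2 N) :
    P (ModuleCat.of R (R ⧸ maximalIdeal R)) := by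
  obtain ⟨a, N₁, _, _, f₁, g₁, hf₁, hg₁, hex₁, hmin₁, b, N₂, _, _, f₂, g₂, hf₂, hg₂, hex₂, hmin₂,
    hnt⟩ := hlong
  have hN₁ : P (ModuleCat.of R N₁) := thick_left h f₁ g₁ hf₁ hg₁ hex₁ (thick_pi h hS a) hN
  have hN₂ : P (ModuleCat.of R N₂) := thick_left h f₂ g₂ hf₂ hg₂ hex₂ (thick_pi h hS b) hN₁
  have hnt' : Nontrivial N₂ := hnt
  have hJI : J ⊓ I = ⊥ := (inf_comm J I).trans hIJ
  have hm' : J ⊔ I = maximalIdeal R • ⊤ := (sup_comm J I).trans hm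
  -- each of `I`, `J` is annihilated by the other one, so membership passes between them
  have hntI : Nontrivial I := (Submodule.nontrivial_iff_ne_bot).2 hI
  have hntJ : Nontrivial J := (Submodule.nontrivial_iff_ne_bot).2 hJ
  have hItoJ : P (ModuleCat.of R I) → P (ModuleCat.of R J) := fun hP =>
    summand_mem_of_killed h he hIJ hm hS I hP
      (fun r hr w => Subtype.ext (smul_eq_zero_of_cyclic he hIJ hr w.2))
  have hJtoI : P (ModuleCat.of R J) → P (ModuleCat.of R I) := fun hP =>
    summand_mem_of_killed h he hJI hm' hS J hP
      (fun r hr w => Subtype.ext (smul_eq_zero_of_cyclic he hJI hr w.2))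
  suffices hor : P (ModuleCat.of R I) ∨ P (ModuleCat.of R J) by
    rcases hor with hP | hP
    · exact residue_mem h he hIJ hm hI hS hP (hItoJ hP)
    · exact residue_mem h he hIJ hm hI hS (hJtoI hP) hP
  -- the second syzygy is the kernel of `k`, and `k` respects every submodule of `S` coordinatewise
  let k : (Fin b → S) →ₗ[R] (Fin a → S) := f₁.comp g₂
  have hk : ∀ v, k v = 0 ↔ ∃ z, f₂ z = v := by
    intro v
    rw [← LinearMap.mem_range, ← hex₂, LinearMap.mem_ker]
    exact map_eq_zero_iff f₁ hf₁
  have hkI : ∀ (K : Submodule R S) (v : Fin b → S), (∀ i, v i ∈ K) → ∀ j, k v j ∈ K := by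
    intro K v hv j
    have hv' : v = ∑ i, LinearMap.single R (fun _ : Fin b => S) i (v i) :=
      (Finset.univ_sum_single v).symm
    rw [hv', map_sum, Finset.sum_apply]
    refine Submodule.sum_mem _ (fun i _ => ?_)
    exact map_mem_of_cyclic he ((LinearMap.proj j).comp (k.comp (LinearMap.single R _ i))) K (hv i)
  let U (K : Submodule R S) : Submodule R N₂ :=
    Submodule.comap f₂ (Submodule.pi Set.univ (fun _ => K))
  have hUmem : ∀ K z, z ∈ U K ↔ ∀ i, f₂ z i ∈ K := by
    intro K z
    simp [U, Submodule.mem_pi]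
  have hcompl : IsCompl (U I) (U J) := by
    constructor
    · rw [disjoint_iff, eq_bot_iff]
      rintro z ⟨h1, h2⟩
      rw [SetLike.mem_coe, hUmem] at h1 h2
      rw [Submodule.mem_bot]
      apply hf₂
      rw [map_zero]
      funext i
      have : f₂ z i ∈ I ⊓ J := ⟨h1 i, h2 i⟩
      rwa [hIJ, Submodule.mem_bot] at this
    · rw [codisjoint_iff, eq_top_iff]
      intro z _
      have h1 : ∀ i, ∃ α ∈ I, ∃ β ∈ J, α + β = f₂ z i := fun i => by
        rw [← Submodule.mem_sup, hm]
        exact hmin₂ z i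
      choose α hα β hβ hαβ using h1
      have hsum : α + β = f₂ z := funext hαβ
      have hk0 : k α + k β = 0 := by
        rw [← map_add, hsum, hk]
        exact ⟨z, rfl⟩
      have hkα : k α = 0 := by
        funext j
        have : k α j ∈ I ⊓ J := by
          refine ⟨hkI I α hα j, ?_⟩
          rw [eq_neg_of_add_eq_zero_left hk0]
          exact J.neg_mem (hkI J β hβ j)
        rwa [hIJ, Submodule.mem_bot] at this
      have hkβ : k β = 0 := by rwa [hkα, zero_add] at hk0
      obtain ⟨x, hx⟩ := (hk α).1 hkα
      obtain ⟨y, hy⟩ := (hk β).1 hkβ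
      refine Submodule.mem_sup.2 ⟨x, (hUmem _ _).2 (hx ▸ hα), y, (hUmem _ _).2 (hy ▸ hβ), hf₂ ?_⟩
      rw [map_add, hx, hy, hsum]
  have hPU : P (ModuleCat.of R (U I)) :=
    thick_summand h (U I).subtype (Submodule.projectionOnto _ _ hcompl)
      (fun z => Submodule.projectionOnto_apply_left hcompl z) hN₂
  have hPV : P (ModuleCat.of R (U J)) :=
    thick_summand h (U J).subtype (Submodule.projectionOnto _ _ hcompl.symm)
      (fun z => Submodule.projectionOnto_apply_left hcompl.symm z) hN₂
  have hkillU : ∀ (K L : Submodule R S), K ⊓ L = ⊥ → ∀ r : R, r • e ∈ L → ∀ w : U K, r • w = 0 := by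
    intro K L hKL r hr w
    apply Subtype.ext
    apply hf₂
    funext i
    rw [Submodule.coe_smul, map_smul, ZeroMemClass.coe_zero, map_zero]
    exact smul_eq_zero_of_cyclic he hKL hr ((hUmem K w).1 w.2 i)
  by_cases hUI : U I = ⊥
  · have hUJ : U J ≠ ⊥ := by
      intro hUJ
      have := hcompl.sup_eq_top
      rw [hUI, hUJ, sup_bot_eq] at this
      exact bot_ne_top this
    have := (Submodule.nontrivial_iff_ne_bot).2 hUJ
    exact Or.inl (summand_mem_of_killed h he hJI hm' hS (U J) hPV (hkillU J I hJI))
  · have := (Submodule.nontrivial_iff_ne_bot).2 hUI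
    exact Or.inr (summand_mem_of_killed h he hIJ hm hS (U I) hPU (hkillU I J hIJ))

end Decomposable

/-! ### The decomposition as `R`-modules -/

section Transport

variable {R : Type u} [CommRing R] [IsLocalRing R]

theorem decomposition_of_quotient {𝔞 : Ideal R}
    (hdec : IsDecomposableModule (R ⧸ 𝔞) (↥((maximalIdeal R).map (Ideal.Quotient.mk 𝔞))))
    {S : Type u} [AddCommGroup S] [Module R S] (E : (R ⧸ 𝔞) ≃ₗ[R] S) :
    ∃ I J : Submodule R S, I ⊓ J = ⊥ ∧ I ⊔ J = maximalIdeal R • ⊤ ∧ I ≠ ⊥ ∧ J ≠ ⊥ := by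
  obtain ⟨N₁, N₂, h₁, h₂, hinf, hsup⟩ := hdec
  let W := (maximalIdeal R).map (Ideal.Quotient.mk 𝔞)
  let ψ : W →ₗ[R] S := E.toLinearMap.comp (W.subtype.restrictScalars R)
  have hψ : Function.Injective ψ := E.injective.comp Subtype.val_injective
  have hrange : LinearMap.range ψ = maximalIdeal R • ⊤ := by
    have h1 : (maximalIdeal R • ⊤ : Submodule R (R ⧸ 𝔞)) = W.restrictScalars R :=
      Ideal.smul_top_eq_map (maximalIdeal R)
    have h2 : (⊤ : Submodule R S) = Submodule.map E.toLinearMap ⊤ := by simp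
    rw [h2, ← Submodule.map_smul'', h1, LinearMap.range_comp]
    congr 1
    ext y
    simp
  have hmap : ∀ N : Submodule (R ⧸ 𝔞) W, N ≠ ⊥ → Submodule.map ψ (N.restrictScalars R) ≠ ⊥ := by
    intro N hN hbot
    apply hN
    rw [← Submodule.map_bot ψ] at hbot
    have hbot := Submodule.map_injective_of_injective hψ hbot
    simpa using hbot
  refine ⟨Submodule.map ψ (N₁.restrictScalars R), Submodule.map ψ (N₂.restrictScalars R),
    ?_, ?_, hmap _ h₁, hmap _ h₂⟩
  · rw [← Submodule.map_inf _ hψ]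
    have : N₁.restrictScalars R ⊓ N₂.restrictScalars R = ⊥ := by
      ext y
      have : y ∈ N₁ ⊓ N₂ ↔ y = 0 := by rw [hinf, Submodule.mem_bot]
      simpa using this
    rw [this, Submodule.map_bot]
  · rw [← Submodule.map_sup, ← hrange, LinearMap.range_eq_map]
    congr 1
    rw [eq_top_iff]
    intro y _
    have hy : y ∈ N₁ ⊔ N₂ := hsup ▸ trivial
    obtain ⟨y₁, hy₁, y₂, hy₂, rfl⟩ := Submodule.mem_sup.1 hy
    exact Submodule.mem_sup.2 ⟨y₁, hy₁, y₂, hy₂, rfl⟩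

end Transport

/-- **Corollary 6.3(2).** If `R` has an isolated singularity and its maximal ideal is
quasi-decomposable, then there is no thick subcategory `𝒳` of `mod R` with
`PD(R) ⊊ 𝒳 ⊊ mod R`. -/
theorem no_intermediate_thick_subcat
    (R : Type u) [CommRing R] [IsNoetherianRing R] [IsLocalRing R]
    (hiso : HasIsolatedSingularity R)
    (hqd : HasQuasiDecomposableMaxIdeal R) :
    ¬ ∃ P : ModuleCat.{u} R → Prop, IsThickSubcat R P ∧
      -- `PD(R) ⊆ 𝒳`
      (∀ A : ModuleCat.{u} R, Module.Finite R A → (∃ n : ℕ, ProjDimLE R A n) → P A) ∧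
      -- `PD(R) ≠ 𝒳`: some module of `𝒳` has infinite projective dimension
      (∃ (A : Type u) (_ : AddCommGroup A) (_ : Module R A), Module.Finite R A ∧
        P (ModuleCat.of R A) ∧ ¬ ∃ n : ℕ, ProjDimLE R A n) ∧
      -- `𝒳 ≠ mod R`
      (∃ B : ModuleCat.{u} R, Module.Finite R B ∧ ¬ P B) := by
  rintro ⟨P, h, hPD, ⟨A, _, _, hAfin, hPA, hApd⟩, B, hBfin, hPB⟩
  have hfree : ∀ n : ℕ, P (ModuleCat.of R (Fin n → R)) := fun n =>
    hPD _ (inferInstanceAs (Module.Finite R (Fin n → R))) ⟨0, projDimLE_free n⟩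
  have hR : P (ModuleCat.of R R) := thick_equiv h (LinearEquiv.funUnique (Fin 1) R R) (hfree 1)
  obtain ⟨x, hx, hreg, hdec⟩ := hqd
  obtain ⟨S, _, _, ⟨e⟩, hS, N, _, _, hN, hlong⟩ :=
    exists_long_quotient h x R hx hreg.toIsWeaklyRegular hR
      (fun n => ⟨A, inferInstance, inferInstance, hPA, long_of_infinite_pd n A hApd⟩)
  let E : (R ⧸ Ideal.ofList x) ≃ₗ[R] S :=
    (Submodule.quotEquivOfEq _ _ (by simp)).trans e
  have hcyc : ∀ s, ∃ r : R, r • E 1 = s := by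
    intro s
    obtain ⟨r, hr⟩ := Ideal.Quotient.mk_surjective (E.symm s)
    refine ⟨r, ?_⟩
    rw [← map_smul, ← LinearEquiv.eq_symm_apply, ← hr, Algebra.smul_def, mul_one]
    rfl
  obtain ⟨I, J, hIJ, hm, hI, hJ⟩ := decomposition_of_quotient hdec E
  have hk := residue_mem_of_long h hcyc hIJ hm hI hJ hS N hN hlong
  exact hPB (finite_mem h hiso hfree hk B hBfin)
end

section
/- Let (R, 𝔪) be a commutative noetherian local ring and M, N finitely generated R-modules, and let t ≥ 0 be an integer such that 𝔪 is a direct summand of Ω_R^t M. If Tor_ℓ^R(M, N) = 0 for some ℓ ≥ t + 1, then N has finite projective dimension over R. -/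
/-!
Let `G` be a minimal free resolution of `N`; then `Tor_j(X, N)` is the homology of `X ⊗ G` in
degree `j`. Dimension shifting along the short exact sequences `0 → Ω^{j+1} M → F_j → Ω^j M → 0`
turns `Tor_ℓ(M, N) = 0` into `Tor_{ℓ-t}(Ω^t M, N) = 0` with `ℓ - t ≥ 1`, and passing to the direct
summand `𝔪` gives `Tor_{ℓ-t}(𝔪, N) = 0`. By the sequence `0 → 𝔪 → R → k → 0` this means
`Tor_{ℓ-t+1}(k, N) = 0`, and since `G` is minimal this `Tor` is `k ⊗ G_{ℓ-t+1}`. Thus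
`G_{ℓ-t+1} = 0`, and by minimality all later terms of `G` vanish too.

All shifting is done by diagram chases on tensored linear maps: `exact_lTensor_syzygy` for the
syzygies and `MinimalFreeResolution.rank_eq_zero_of_exact_maximalIdeal` for the step from `𝔪` to
`k`. The only contact with derived functors is `MinimalFreeResolution.exact_lTensor_of_tor`.
-/

universe u

open IsLocalRing CategoryTheory

/-! ### Exactness after tensoring -/

section TensorExactness

variable {R : Type u} [CommRing R]

lemma lTensor_rTensor_comm {U V Z W : Type u} [AddCommGroup U] [Module R U]
    [AddCommGroup V] [Module R V] [AddCommGroup Z] [Module R Z] [AddCommGroup W] [Module R W]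
    (a : U →ₗ[R] V) (b : Z →ₗ[R] W) (z : TensorProduct R U Z) :
    b.lTensor V (a.rTensor Z z) = a.rTensor W (b.lTensor U z) := by
  rw [← LinearMap.comp_apply, ← LinearMap.comp_apply, LinearMap.lTensor_comp_rTensor,
    LinearMap.rTensor_comp_lTensor]

/-- For an exact sequence `X → Y → Z` the corestriction of `f : X → Y` gives a short exact
sequence `0 → ker f → X → ker g → 0`. -/
lemma shortExact_ker_ker {X Y Z : Type u} [AddCommGroup X] [Module R X]
    [AddCommGroup Y] [Module R Y] [AddCommGroup Z] [Module R Z]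
    {f : X →ₗ[R] Y} {g : Y →ₗ[R] Z} (h : Function.Exact f g) :
    ∃ (i : LinearMap.ker f →ₗ[R] X) (p : X →ₗ[R] LinearMap.ker g),
      Function.Injective i ∧ Function.Exact i p ∧ Function.Surjective p := by
  refine ⟨(LinearMap.ker f).subtype, f.codRestrict (LinearMap.ker g)
    fun x => LinearMap.mem_ker.2 (h.apply_apply_eq_zero x), Subtype.val_injective, ?_, ?_⟩
  · rw [LinearMap.exact_iff, LinearMap.ker_codRestrict, Submodule.range_subtype]
  · rintro ⟨x, hx⟩
    obtain ⟨y, hy⟩ := (h x).1 hx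
    exact ⟨y, Subtype.ext hy⟩

lemma exact_lTensor_of_retract {A X P Q T : Type u}
    [AddCommGroup A] [Module R A] [AddCommGroup X] [Module R X]
    [AddCommGroup P] [Module R P] [AddCommGroup Q] [Module R Q] [AddCommGroup T] [Module R T]
    {f : P →ₗ[R] Q} {g : Q →ₗ[R] T} (h : IsDirectSummand R A X)
    (hX : Function.Exact (f.lTensor X) (g.lTensor X)) :
    Function.Exact (f.lTensor A) (g.lTensor A) := by
  obtain ⟨ι, π, hπι⟩ := h
  have hid : ∀ {Z : Type u} [AddCommGroup Z] [Module R Z] (z : TensorProduct R A Z),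
      π.rTensor Z (ι.rTensor Z z) = z := by
    intro Z _ _ z
    rw [← LinearMap.comp_apply, ← LinearMap.rTensor_comp, hπι, LinearMap.rTensor_id,
      LinearMap.id_apply]
  intro z
  constructor
  · intro hz
    obtain ⟨y, hy⟩ := (hX (ι.rTensor Q z)).1 (by rw [lTensor_rTensor_comm, hz, map_zero])
    exact ⟨π.rTensor P y, by rw [lTensor_rTensor_comm, hy, hid]⟩
  · rintro ⟨y, rfl⟩
    have := (hX (f.lTensor X (ι.rTensor P y))).2 ⟨_, rfl⟩
    rw [lTensor_rTensor_comm, lTensor_rTensor_comm] at this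
    rw [← hid (g.lTensor A _), this, map_zero]

/-- Dimension shifting for `Tor`: if `0 → K → F → M → 0` is exact with `F` flat, and
`G₃ → G₂ → G₁ → G₀` is exact with `G₁` flat, then exactness of `M ⊗ G` at `G₂`
implies exactness of `K ⊗ G` at `G₁`. -/
lemma exact_lTensor_syzygy {K F M G₀ G₁ G₂ G₃ : Type u}
    [AddCommGroup K] [Module R K] [AddCommGroup F] [Module R F] [AddCommGroup M] [Module R M]
    [AddCommGroup G₀] [Module R G₀] [AddCommGroup G₁] [Module R G₁]
    [AddCommGroup G₂] [Module R G₂] [AddCommGroup G₃] [Module R G₃]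
    [Module.Flat R F] [Module.Flat R G₁]
    {i : K →ₗ[R] F} {p : F →ₗ[R] M} (hi : Function.Injective i) (hip : Function.Exact i p)
    (hp : Function.Surjective p)
    {d₀ : G₁ →ₗ[R] G₀} {d₁ : G₂ →ₗ[R] G₁} {d₂ : G₃ →ₗ[R] G₂}
    (h₀₁ : Function.Exact d₁ d₀) (h₁₂ : Function.Exact d₂ d₁)
    (hM : Function.Exact (d₂.lTensor M) (d₁.lTensor M)) :
    Function.Exact (d₁.lTensor K) (d₀.lTensor K) := by
  have hF₀₁ := Module.Flat.lTensor_exact F h₀₁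
  have hF₁₂ := Module.Flat.lTensor_exact F h₁₂
  have hinj := Module.Flat.rTensor_preserves_injective_linearMap (M := G₁) i hi
  intro x
  constructor
  · intro hx
    obtain ⟨y, hy⟩ := (hF₀₁ (i.rTensor G₁ x)).1 (by rw [lTensor_rTensor_comm, hx, map_zero])
    obtain ⟨zb, hzb⟩ := (hM (p.rTensor G₂ y)).1 (by
      rw [lTensor_rTensor_comm, hy]
      exact (rTensor_exact G₁ hip hp _).2 ⟨x, rfl⟩)
    obtain ⟨z, rfl⟩ := LinearMap.rTensor_surjective G₃ hp zb
    obtain ⟨w, hw⟩ := (rTensor_exact G₂ hip hp (y - d₂.lTensor F z)).1 (by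
      rw [map_sub, ← hzb, lTensor_rTensor_comm, sub_self])
    refine ⟨w, hinj ?_⟩
    rw [← lTensor_rTensor_comm, hw, map_sub, hy, hF₁₂.apply_apply_eq_zero, sub_zero]
  · rintro ⟨y, rfl⟩
    rw [← LinearMap.comp_apply, ← LinearMap.lTensor_comp, h₀₁.linearMap_comp_eq_zero,
      LinearMap.lTensor_zero, LinearMap.zero_apply]

end TensorExactness

/-! ### Minimal free resolutions -/

section MinimalResolutions

variable {R : Type u} [CommRing R] [IsLocalRing R]

/-- Over a local ring a finitely generated module has a minimal free cover: lift a basis of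
`k ⊗ M` and apply Nakayama's lemma. -/
lemma exists_minimal_cover (M : Type u) [AddCommGroup M] [Module R M] [Module.Finite R M] :
    ∃ (n : ℕ) (f : (Fin n → R) →ₗ[R] M), Function.Surjective f ∧
      LinearMap.ker f ≤ maximalIdeal R • (⊤ : Submodule R (Fin n → R)) := by
  let b := Module.finBasis (ResidueField R) (TensorProduct R (ResidueField R) M)
  have hsurj : Function.Surjective (TensorProduct.mk R (ResidueField R) M 1) :=
    TensorProduct.mk_surjective R M (ResidueField R) Ideal.Quotient.mk_surjective
  choose v hv using fun i => hsurj (b i)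
  refine ⟨_, Fintype.linearCombination R v, ?_, ?_⟩
  · rw [← LinearMap.range_eq_top, Fintype.range_linearCombination]
    exact IsLocalRing.span_eq_top_of_tmul_eq_basis v b hv
  · intro x hx
    have h1 : ∑ i, residue R (x i) • b i = 0 := by
      have := congrArg (TensorProduct.mk R (ResidueField R) M 1) hx
      rw [Fintype.linearCombination_apply, map_sum, map_zero] at this
      rw [← this]
      refine Finset.sum_congr rfl fun i _ => ?_
      rw [map_smul, hv]
      exact algebraMap_smul (ResidueField R) (x i) (b i)
    have h2 := Fintype.linearIndependent_iff.1 b.linearIndependent _ h1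
    rw [pi_eq_sum_univ' x]
    refine Submodule.sum_mem _ fun i _ => Submodule.smul_mem_smul ?_ trivial
    exact (residue_eq_zero_iff _).1 (h2 i)

lemma exists_minimalFreeResolution [IsNoetherianRing R]
    (M : Type u) [AddCommGroup M] [Module R M] [Module.Finite R M] :
    Nonempty (MinimalFreeResolution R M) := by
  obtain ⟨n₀, aug, haug, hker⟩ := exists_minimal_cover (R := R) M
  -- Each stage records a free module together with the kernel that the next stage has to cover.
  choose n f hf hmin using fun s : (Σ n : ℕ, Submodule R (Fin n → R)) =>
    exists_minimal_cover (R := R) s.2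
  let s : ℕ → Σ n : ℕ, Submodule R (Fin n → R) := fun i =>
    Nat.rec ⟨n₀, LinearMap.ker aug⟩ (fun _ s => ⟨n s, LinearMap.ker (f s)⟩) i
  have hrange : ∀ i, LinearMap.range ((s i).2.subtype.comp (f (s i))) = (s i).2 := by
    intro i
    rw [LinearMap.range_comp, LinearMap.range_eq_top.2 (hf _), Submodule.map_top,
      Submodule.range_subtype]
  refine ⟨{ rank := fun i => (s i).1
            aug := aug
            d := fun i => (s i).2.subtype.comp (f (s i))
            aug_surjective := haug
            exact_aug := (hrange 0).symm
            exact := fun i => ?_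
            minimal := fun i => ?_ }⟩
  · rw [hrange (i + 1), LinearMap.ker_comp, Submodule.ker_subtype]
    rfl
  · rw [hrange i]
    cases i with
    | zero => exact hker
    | succ i => exact hmin (s i)

namespace MinimalFreeResolution

variable {M : Type u} [AddCommGroup M] [Module R M] (F : MinimalFreeResolution R M)

lemma function_exact (i : ℕ) : Function.Exact (F.d (i + 1)) (F.d i) :=
  LinearMap.exact_iff.2 (F.exact i)

lemma function_exact_aug : Function.Exact (F.d 0) F.aug :=
  LinearMap.exact_iff.2 F.exact_aug

/-- By Nakayama's lemma, `F_i = 𝔪 F_i` forces `F_i = 0`. -/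
lemma rank_eq_zero {i : ℕ}
    (h : (⊤ : Submodule R (Fin (F.rank i) → R)) ≤ maximalIdeal R • ⊤) : F.rank i = 0 := by
  have htop := Submodule.eq_bot_of_le_smul_of_le_jacobson_bot (maximalIdeal R) _
    Module.Finite.fg_top h (IsLocalRing.maximalIdeal_le_jacobson _)
  by_contra h0
  have : Nonempty (Fin (F.rank i)) := ⟨⟨0, Nat.pos_of_ne_zero h0⟩⟩
  exact top_ne_bot htop

lemma rank_succ_eq_zero {i : ℕ} (h : F.rank i = 0) : F.rank (i + 1) = 0 := by
  apply F.rank_eq_zero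
  intro x _
  have : IsEmpty (Fin (F.rank i)) := by rw [h]; infer_instance
  apply F.minimal (i + 1)
  rw [← F.exact]
  exact Subsingleton.elim _ _

lemma rank_eq_zero_of_le {i j : ℕ} (h : F.rank i = 0) (hij : i ≤ j) : F.rank j = 0 := by
  induction j, hij using Nat.le_induction with
  | base => exact h
  | succ j _ ih => exact F.rank_succ_eq_zero ih

/-- If `𝔪 ⊗ F` is exact in degree `i + 1` then so is, in degree `i + 2`, the complex `k ⊗ F`,
whose differentials vanish; hence `F_{i + 2} = 0`. The proof stays inside `F_{i + 2}`: each of its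
elements differs from an element of `𝔪 F_{i + 2}` by a cycle, and cycles lie in `𝔪 F_{i + 2}`. -/
lemma rank_eq_zero_of_exact_maximalIdeal {i : ℕ}
    (h : Function.Exact ((F.d (i + 1)).lTensor (maximalIdeal R))
      ((F.d i).lTensor (maximalIdeal R))) : F.rank (i + 2) = 0 := by
  -- the multiplication map `𝔪 ⊗ F_j → F_j`, with image `𝔪 F_j`
  let μ : ∀ j, TensorProduct R (maximalIdeal R) (Fin (F.rank j) → R) →ₗ[R] (Fin (F.rank j) → R) :=
    fun j => (TensorProduct.lid R _).toLinearMap.comp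
      ((maximalIdeal R).subtype.rTensor (Fin (F.rank j) → R))
  have hμ : ∀ j, LinearMap.range (μ j) =
      maximalIdeal R • (⊤ : Submodule R (Fin (F.rank j) → R)) := by
    intro j
    rw [LinearMap.range_comp]
    exact Submodule.map_range_rTensor_subtype_lid
  have hinj : ∀ j, Function.Injective (μ j) := fun j =>
    (TensorProduct.lid R _).injective.comp
      (Module.Flat.rTensor_preserves_injective_linearMap _ Subtype.val_injective)
  have hcomm : ∀ j x, μ j ((F.d j).lTensor (maximalIdeal R) x) = F.d j (μ (j + 1) x) := by
    intro j x
    induction x with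
    | zero => simp
    | add x y hx hy => simp only [map_add, hx, hy]
    | tmul a x => simp [μ]
  apply F.rank_eq_zero
  intro y _
  obtain ⟨x, hx⟩ : F.d (i + 1) y ∈ LinearMap.range (μ (i + 1)) := by
    rw [hμ]; exact F.minimal _ ⟨y, rfl⟩
  obtain ⟨w, rfl⟩ := (h x).1 (hinj i (by
    rw [hcomm, hx, map_zero, (F.function_exact i).apply_apply_eq_zero]))
  rw [hcomm] at hx
  have h1 : y - μ (i + 2) w ∈ maximalIdeal R • (⊤ : Submodule R (Fin (F.rank (i + 2)) → R)) := by
    apply F.minimal (i + 2)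
    rw [← F.exact, LinearMap.mem_ker, map_sub, hx, sub_self]
  have h2 : μ (i + 2) w ∈ maximalIdeal R • (⊤ : Submodule R (Fin (F.rank (i + 2)) → R)) := by
    rw [← hμ]; exact ⟨w, rfl⟩
  simpa using add_mem h1 h2

/-- The module `Ω^i M` computed from the resolution `F`, bundled so as to be uniform in `i`. -/
def syzygy : ℕ → ModuleCat.{u} R
  | 0 => ModuleCat.of R M
  | 1 => ModuleCat.of R (LinearMap.ker F.aug)
  | (j + 2) => ModuleCat.of R (LinearMap.ker (F.d j))

lemma isNthSyzygy (i : ℕ) : IsNthSyzygy R i M (F.syzygy i) := by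
  refine ⟨F, ?_⟩
  match i with
  | 0 => exact ⟨LinearEquiv.refl R M⟩
  | 1 => exact ⟨LinearEquiv.refl R _⟩
  | (j + 2) => exact ⟨LinearEquiv.refl R _⟩

lemma exists_shortExact_syzygy (j : ℕ) :
    ∃ (i : F.syzygy (j + 1) →ₗ[R] (Fin (F.rank j) → R))
      (p : (Fin (F.rank j) → R) →ₗ[R] F.syzygy j),
      Function.Injective i ∧ Function.Exact i p ∧ Function.Surjective p := by
  match j with
  | 0 => exact ⟨(LinearMap.ker F.aug).subtype, F.aug, Subtype.val_injective,
      LinearMap.exact_subtype_ker_map F.aug, F.aug_surjective⟩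
  | 1 => exact shortExact_ker_ker F.function_exact_aug
  | (j + 2) => exact shortExact_ker_ker (F.function_exact j)

/-- `Tor_{i + t + 1}(M, N) = 0` implies `Tor_{i + 1}(Ω^t M, N) = 0`, both computed from the
resolution `G` of `N`. -/
lemma exact_lTensor_nth_syzygy {N : Type u} [AddCommGroup N] [Module R N]
    (G : MinimalFreeResolution R N) (t : ℕ) : ∀ i : ℕ,
    Function.Exact ((G.d (i + t + 1)).lTensor M) ((G.d (i + t)).lTensor M) →
    Function.Exact ((G.d (i + 1)).lTensor (F.syzygy t)) ((G.d i).lTensor (F.syzygy t)) := by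
  induction t with
  | zero => exact fun i h => h
  | succ t ih =>
    intro i h
    obtain ⟨a, p, ha, hap, hp⟩ := F.exists_shortExact_syzygy t
    refine exact_lTensor_syzygy ha hap hp (G.function_exact i) (G.function_exact (i + 1))
      (ih (i + 1) ?_)
    rwa [show i + 1 + t = i + (t + 1) by omega]

end MinimalFreeResolution

end MinimalResolutions

/-! ### Computing `Tor` from a minimal free resolution -/

section TorComparison

variable {R : Type u} [CommRing R] [IsLocalRing R] {N : Type u} [AddCommGroup N] [Module R N]

namespace MinimalFreeResolution

variable (G : MinimalFreeResolution R N)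

/-- The chain complex `⋯ → G₁ → G₀` in `ModuleCat R`. -/
noncomputable def complex : ChainComplex (ModuleCat.{u} R) ℕ :=
  ChainComplex.of (fun i => ModuleCat.of R (Fin (G.rank i) → R))
    (fun i => ModuleCat.ofHom (G.d i)) fun i => by
      rw [← ModuleCat.ofHom_comp, (G.function_exact i).linearMap_comp_eq_zero]
      rfl

lemma complex_d (i : ℕ) : G.complex.d (i + 1) i = ModuleCat.ofHom (G.d i) :=
  ChainComplex.of_d (fun i => ModuleCat.of R (Fin (G.rank i) → R))
    (fun i => ModuleCat.ofHom (G.d i)) i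

lemma complex_exactAt_succ (i : ℕ) : G.complex.ExactAt (i + 1) := by
  rw [HomologicalComplex.exactAt_iff' _ (i + 1 + 1) (i + 1) i (by simp) (by simp),
    ShortComplex.ShortExact.moduleCat_exact_iff_function_exact]
  change Function.Exact (G.complex.d (i + 1 + 1) (i + 1)) (G.complex.d (i + 1) i)
  rw [complex_d, complex_d]
  exact G.function_exact i

/-- A minimal free resolution as a projective resolution in Mathlib's sense. -/
noncomputable def projectiveResolution : ProjectiveResolution (ModuleCat.of R N) where
  complex := G.complex
  projective i := 
    (ModuleCat.of R (Fin (G.rank i) → R)).projective_of_categoryTheory_projective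
  π := (ChainComplex.toSingle₀Equiv _ _).symm ⟨ModuleCat.ofHom G.aug, by
    rw [complex_d]
    refine ModuleCat.hom_ext ?_
    exact G.function_exact_aug.linearMap_comp_eq_zero⟩
  quasiIso := ⟨fun n => by
    cases n
    · rw [ChainComplex.quasiIsoAt₀_iff, ShortComplex.quasiIso_iff_of_zeros']
      · refine (ShortComplex.exact_and_epi_g_iff_of_iso (S₂ := ShortComplex.mk
          (ModuleCat.ofHom (G.d 0)) (ModuleCat.ofHom G.aug) (ModuleCat.hom_ext
            G.function_exact_aug.linearMap_comp_eq_zero)) ?_).2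
          ⟨(ShortComplex.ShortExact.moduleCat_exact_iff_function_exact _).2 G.function_exact_aug,
            (ModuleCat.epi_iff_surjective _).2 G.aug_surjective⟩
        refine ShortComplex.isoMk (Iso.refl _) (Iso.refl _) (Iso.refl _) ?_ ?_
        · change 𝟙 _ ≫ ModuleCat.ofHom (G.d 0) = G.complex.d 1 0 ≫ 𝟙 _
          rw [complex_d]
          rfl
        · change 𝟙 _ ≫ ModuleCat.ofHom G.aug =
            ((ChainComplex.toSingle₀Equiv _ _).symm _ : G.complex ⟶ _).f 0 ≫ 𝟙 _
          rw [Category.comp_id]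
          exact (ChainComplex.toSingle₀Equiv_symm_apply_f_zero
            (C := G.complex) (X := ModuleCat.of R N) (ModuleCat.ofHom G.aug) _).symm
      all_goals rfl
    · rw [quasiIsoAt_iff_exactAt']
      · apply complex_exactAt_succ
      · apply ChainComplex.exactAt_succ_single_obj⟩

/-- Vanishing of Mathlib's `Tor_{i + 1}(M, N)`, which is left-derived in the second variable, says
that `M ⊗ G` is exact in degree `i + 1`. -/
lemma exact_lTensor_of_tor {M : Type u} [AddCommGroup M] [Module R M] (i : ℕ)
    (htor : Subsingleton
      (((Tor (ModuleCat.{u} R) (i + 1)).obj (ModuleCat.of R M)).obj (ModuleCat.of R N))) :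
    Function.Exact ((G.d (i + 1)).lTensor M) ((G.d i).lTensor M) := by
  let T := (MonoidalCategory.tensoringLeft (ModuleCat.{u} R)).obj (ModuleCat.of R M)
  have h0 : Limits.IsZero ((T.leftDerived (i + 1)).obj (ModuleCat.of R N)) :=
    @ModuleCat.isZero_of_subsingleton R _ _ htor
  have h1 := h0.of_iso (G.projectiveResolution.isoLeftDerivedObj T (i + 1)).symm
  have h2 : ((T.mapHomologicalComplex _).obj G.projectiveResolution.complex).ExactAt (i + 1) :=
    (HomologicalComplex.exactAt_iff_isZero_homology _ _).2 h1
  rw [HomologicalComplex.exactAt_iff' _ (i + 1 + 1) (i + 1) i (by simp) (by simp),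
    ShortComplex.ShortExact.moduleCat_exact_iff_function_exact] at h2
  change Function.Exact (T.map (G.complex.d (i + 1 + 1) (i + 1))) (T.map (G.complex.d (i + 1) i))
    at h2
  rw [complex_d, complex_d] at h2
  exact h2

end MinimalFreeResolution

end TorComparison

/-- **Lemma 7.1(1a).** If `𝔪` is a direct summand of `Ω^t M` and `Tor_ℓ^R(M, N) = 0` for some
`ℓ ≥ t + 1`, then `pd_R N < ∞`. -/
theorem finite_projDim_of_tor_vanishing
    (R : Type u) [CommRing R] [IsNoetherianRing R] [IsLocalRing R]
    (M N : Type u) [AddCommGroup M] [Module R M] [Module.Finite R M]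
    [AddCommGroup N] [Module R N] [Module.Finite R N]
    (t : ℕ)
    (hsum : ∀ (S : Type u) [AddCommGroup S] [Module R S],
      IsNthSyzygy R t M S → IsDirectSummand R (↥(maximalIdeal R)) S)
    (ℓ : ℕ) (hl : t + 1 ≤ ℓ)
    (htor : Subsingleton
      (((Tor (ModuleCat.{u} R) ℓ).obj (ModuleCat.of R M)).obj (ModuleCat.of R N))) :
    ∃ n : ℕ, ProjDimLE R N n := by
  obtain ⟨F⟩ := exists_minimalFreeResolution (R := R) M
  obtain ⟨G⟩ := exists_minimalFreeResolution (R := R) N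
  obtain ⟨i, rfl⟩ : ∃ i, ℓ = i + t + 1 := ⟨ℓ - (t + 1), by omega⟩
  have h := exact_lTensor_of_retract (hsum _ (F.isNthSyzygy t))
    (F.exact_lTensor_nth_syzygy G t i (G.exact_lTensor_of_tor (i + t) htor))
  exact ⟨i + 1, G, fun j hj =>
    G.rank_eq_zero_of_le (G.rank_eq_zero_of_exact_maximalIdeal h) (by omega)⟩
end

section
/- Let R = S ×_k T be a non-trivial fiber product of commutative noetherian local rings S and T with common residue field k (so S ≠ k ≠ T), i.e., R is the pullback of the natural surjections S → k ← T. Let M and N be finitely generated R-modules. If S or T has depth 0 and Tor_ℓ^R(M, N) = 0 for some ℓ ≥ 5, then M is a free R-module or N is a free R-module. -/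
/-!
The maximal ideal `m` of `R` is the direct sum of the ideals `I = m_S × 0` and `J = 0 × m_T`, both
nonzero and with `I J = 0`. As `S` (say) has depth zero, `I` contains a nonzero `s` with `m s = 0`.

Second syzygies split. If `F₁ → F₀` is a map of free modules with kernel `U` inside
`m F₁ = I F₁ ⊕ J F₁`, then `U = (U ∩ I F₁) ⊕ (U ∩ J F₁)`, because `F₁ → F₀` respects the
decompositions and `I F₀ ∩ J F₀ = 0`. Write `U = X ⊕ Y`, where `J X = 0` and `I Y = 0`
(`IsSplit`, `isSplit_ker`). The syzygy `W` of `U` splits in the same way as `A ⊕ B`.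

Let `V = X' ⊕ Y'` be another such module. If `A` and `Y'` are nonzero, take minimal generators
`w ∈ A` of `W` and `y ∈ Y'` of `V`. The element `w ⊗ y` of `W ⊗ V` is nonzero modulo `m`, yet it dies
in `F ⊗ V` because `w` has coordinates in `I` and `I y = 0`. So `Tor₁(U, V) ≠ 0`; likewise if `B` and
`X'` are nonzero (`eq_bot_of_coeffIn_ne_bot`). Now `s` annihilates `U`, so `A ≠ 0` as soon as
`U ≠ 0`. Hence, when `Tor₁(U, V) = 0` with `U, V ≠ 0`, one gets `Y' = 0` and, by symmetry, `Y = 0`;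
then `X ≠ 0` is annihilated by `J`, so `B ≠ 0` and `X' = 0`, contradicting `V ≠ 0`
(`subsingleton_or`).

Vanishing of `Tor_ℓ(M, N)` with `ℓ ≥ 5` yields, by dimension shifting in both variables
(`TorOneVanishes.shift`), vanishing of `Tor₁` of the second minimal syzygies of `N` and of the
`(ℓ - 5)`-th minimal syzygy of `M`. One of these second syzygies is zero. A free minimal syzygy is
annihilated by `s` and hence zero, so `M` or `N` is free (`free_of_free_ker`).
-/

universe u

open IsLocalRing CategoryTheory

namespace FiberProductTor

open TensorProduct Function

/-! ### Vanishing of `Tor₁` and dimension shifting -/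

section TorOne

variable {R : Type u} [CommRing R]

/-- The vanishing of `Tor₁(M, N)`, expressed by one flat cover `F → M` with kernel `L`: the map
`L ⊗ N → F ⊗ N` is injective. `TorOneVanishes.rTensor_injective` shows that the choice of the cover
does not matter. -/
def TorOneVanishes (R : Type u) [CommRing R] (M N : Type u) [AddCommGroup M] [Module R M]
    [AddCommGroup N] [Module R N] : Prop :=
  ∃ (F : Type u) (_ : AddCommGroup F) (_ : Module R F) (_ : Module.Flat R F) (p : F →ₗ[R] M),
    Surjective p ∧ Injective (p.ker.subtype.rTensor N)

variable {M N F G : Type u} [AddCommGroup M] [Module R M] [AddCommGroup N] [Module R N]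
  [AddCommGroup F] [Module R F] [AddCommGroup G] [Module R G]

/-- The diagram chase behind the symmetry of `Tor₁`: it may be computed from a cover of either
argument. -/
theorem lTensor_ker_injective [Module.Flat R F] (p : F →ₗ[R] M) (hp : Surjective p)
    (q : G →ₗ[R] N) (hq : Surjective q) (h : Injective (p.ker.subtype.rTensor N)) :
    Injective (q.ker.subtype.lTensor M) := by
  rw [injective_iff_map_eq_zero]
  intro z hz
  obtain ⟨y, rfl⟩ := LinearMap.rTensor_surjective q.ker hp z
  have exG : Exact (p.ker.subtype.rTensor G) (p.rTensor G) :=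
    rTensor_exact G (LinearMap.exact_subtype_ker_map p) hp
  have exN : Exact (p.ker.subtype.rTensor q.ker) (p.rTensor q.ker) :=
    rTensor_exact q.ker (LinearMap.exact_subtype_ker_map p) hp
  have exK : Exact (q.ker.subtype.lTensor p.ker) (q.lTensor p.ker) :=
    lTensor_exact p.ker (LinearMap.exact_subtype_ker_map q) hq
  have exF : Exact (q.ker.subtype.lTensor F) (q.lTensor F) :=
    lTensor_exact F (LinearMap.exact_subtype_ker_map q) hq
  have h1 : p.rTensor G (q.ker.subtype.lTensor F y) = 0 := by
    rw [← hz, ← LinearMap.comp_apply, ← LinearMap.comp_apply, LinearMap.rTensor_comp_lTensor,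
      LinearMap.lTensor_comp_rTensor]
  obtain ⟨w, hw⟩ := (exG _).1 h1
  have h2 : q.lTensor p.ker w = 0 := by
    apply h
    rw [map_zero, ← LinearMap.comp_apply, LinearMap.rTensor_comp_lTensor,
      ← LinearMap.lTensor_comp_rTensor, LinearMap.comp_apply, hw]
    exact exF.apply_apply_eq_zero y
  obtain ⟨v, rfl⟩ := (exK _).1 h2
  have h3 : p.ker.subtype.rTensor q.ker v = y := by
    apply Module.Flat.lTensor_preserves_injective_linearMap (M := F) q.ker.subtype
      (Submodule.subtype_injective _)
    rw [← hw, ← LinearMap.comp_apply, ← LinearMap.comp_apply, LinearMap.rTensor_comp_lTensor,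
      LinearMap.lTensor_comp_rTensor]
  rw [← h3]
  exact exN.apply_apply_eq_zero v

theorem TorOneVanishes.lTensor_injective (h : TorOneVanishes R M N) (q : G →ₗ[R] N)
    (hq : Surjective q) : Injective (q.ker.subtype.lTensor M) := by
  obtain ⟨F, _, _, _, p, hp, hi⟩ := h
  exact lTensor_ker_injective p hp q hq hi

theorem TorOneVanishes.of_lTensor_injective [Module.Flat R G] (q : G →ₗ[R] N)
    (hq : Surjective q) (h : Injective (q.ker.subtype.lTensor M)) : TorOneVanishes R N M := by
  refine ⟨G, _, _, inferInstance, q, hq, ?_⟩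
  rwa [← LinearMap.lTensor_inj_iff_rTensor_inj]

theorem TorOneVanishes.symm (h : TorOneVanishes R M N) : TorOneVanishes R N M :=
  .of_lTensor_injective (Finsupp.linearCombination R (id : N → N))
    (Finsupp.linearCombination_id_surjective R N) (h.lTensor_injective _
    (Finsupp.linearCombination_id_surjective R N))

theorem TorOneVanishes.rTensor_injective (h : TorOneVanishes R M N) (p : F →ₗ[R] M)
    (hp : Surjective p) : Injective (p.ker.subtype.rTensor N) := by
  rw [← LinearMap.lTensor_inj_iff_rTensor_inj]
  exact h.symm.lTensor_injective p hp

/-- Balanced dimension shift: for syzygies `L` of `M` and `K` of `N`, vanishing of `Tor₁(M, K)`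
implies vanishing of `Tor₁(L, N)`, as both say that `L ⊗ K → F ⊗ G` is injective. -/
theorem TorOneVanishes.shift [Module.Flat R F] [Module.Flat R G] (p : F →ₗ[R] M)
    (hp : Surjective p) (q : G →ₗ[R] N) (hq : Surjective q) (h : TorOneVanishes R M q.ker) :
    TorOneVanishes R p.ker N := by
  refine (TorOneVanishes.of_lTensor_injective q hq ?_).symm
  have h1 := h.rTensor_injective p hp
  have h2 := Module.Flat.lTensor_preserves_injective_linearMap (M := F) q.ker.subtype
      (Submodule.subtype_injective _)
  have h3 := h2.comp h1
  rw [← LinearMap.coe_comp, LinearMap.lTensor_comp_rTensor, ← LinearMap.rTensor_comp_lTensor,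
    LinearMap.coe_comp] at h3
  exact h3.of_comp

/-- The shift along one step of an exact complex, whose kernels are successive syzygies. -/
theorem TorOneVanishes.shift_exact {A B C : Type u} [AddCommGroup A] [Module R A]
    [AddCommGroup B] [Module R B] [AddCommGroup C] [Module R C] [Module.Flat R F]
    [Module.Flat R A] (p : F →ₗ[R] M) (hp : Surjective p) {d : A →ₗ[R] B} {d' : B →ₗ[R] C}
    (hd : Exact d d') (h : TorOneVanishes R M d.ker) : TorOneVanishes R p.ker d'.ker := by
  rw [LinearMap.exact_iff.1 hd]
  refine TorOneVanishes.shift p hp d.rangeRestrict d.surjective_rangeRestrict ?_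
  rwa [LinearMap.ker_rangeRestrict]

end TorOne

/-! ### From `Tor` to syzygies -/

section Resolution

variable {R : Type u} [CommRing R] {N : ModuleCat.{u} R} (P : ProjectiveResolution N)

theorem resolution_exact (j : ℕ) :
    Exact (P.complex.d (j + 2) (j + 1)).hom (P.complex.d (j + 1) j).hom :=
  (ShortComplex.ShortExact.moduleCat_exact_iff_function_exact _).1 (P.exact_succ j)

theorem resolution_exact_zero :
    Exact (P.complex.d 1 0).hom (P.π.f 0).hom := by
  have := P.exact₀
  exact (ShortComplex.ShortExact.moduleCat_exact_iff_function_exact _).1 this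

theorem resolution_surj : Surjective (P.π.f 0).hom :=
  (ModuleCat.epi_iff_surjective (P.π.f 0)).1 inferInstance

instance (n : ℕ) : Module.Flat R (P.complex.X n) :=
  have : Module.Projective R (P.complex.X n) :=
    (IsProjective.iff_projective (P.complex.X n)).2 (P.projective n)
  inferInstance

/-- Vanishing of `Tor_{j+3}(M, N)` is vanishing of `Tor₁` of `M` and a syzygy of `N`. The syzygy is
that of an arbitrary projective resolution, hence possibly neither minimal nor finitely generated. -/
theorem torOneVanishes_of_tor {M : Type u} [AddCommGroup M] [Module R M] (j : ℕ)
    (htor : Subsingleton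
      (((Tor (ModuleCat.{u} R) (j + 3)).obj (ModuleCat.of R M)).obj N)) :
    TorOneVanishes R M (P.complex.d (j + 1) j).hom.ker := by
  let T := (MonoidalCategory.tensoringLeft (ModuleCat.{u} R)).obj (ModuleCat.of R M)
  have hz : Limits.IsZero ((HomologicalComplex.homologyFunctor (ModuleCat R)
      (ComplexShape.down ℕ) (j + 3)).obj
      ((T.mapHomologicalComplex (ComplexShape.down ℕ)).obj P.complex)) :=
    Limits.IsZero.of_iso (@ModuleCat.isZero_of_subsingleton R _
      (((Tor (ModuleCat.{u} R) (j + 3)).obj (ModuleCat.of R M)).obj N) htor)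
      (P.isoLeftDerivedObj T (j + 3)).symm
  have hex := (HomologicalComplex.exactAt_iff_isZero_homology _ _).2 hz
  rw [HomologicalComplex.exactAt_iff' _ (j + 4) (j + 3) (j + 2) (by simp) (by simp)] at hex
  have hex' : Exact ((P.complex.d (j + 4) (j + 3)).hom.lTensor M)
      ((P.complex.d (j + 3) (j + 2)).hom.lTensor M) :=
    (ShortComplex.ShortExact.moduleCat_exact_iff_function_exact _).1 hex
  let d := (P.complex.d (j + 2) (j + 1)).hom
  have hsub : d.ker = (P.complex.d (j + 3) (j + 2)).hom.range :=
    LinearMap.exact_iff.1 (resolution_exact P (j + 1))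
  rw [LinearMap.exact_iff.1 (resolution_exact P j)]
  refine (TorOneVanishes.of_lTensor_injective d.rangeRestrict d.surjective_rangeRestrict ?_).symm
  rw [LinearMap.ker_rangeRestrict, hsub, injective_iff_map_eq_zero]
  intro z hz
  let d' := (P.complex.d (j + 3) (j + 2)).hom
  obtain ⟨y, rfl⟩ := LinearMap.lTensor_surjective M d'.surjective_rangeRestrict z
  replace hz : d'.lTensor M y = 0 := by
    rw [← hz, ← LinearMap.comp_apply, ← LinearMap.lTensor_comp]
    rfl
  obtain ⟨x, rfl⟩ := (hex' y).1 hz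
  have h0 : d'.rangeRestrict ∘ₗ (P.complex.d (j + 4) (j + 3)).hom = 0 := by
    ext a
    exact (resolution_exact P (j + 2)).apply_apply_eq_zero a
  rw [← LinearMap.comp_apply, ← LinearMap.lTensor_comp, h0, LinearMap.lTensor_zero,
    LinearMap.zero_apply]

end Resolution

/-! ### Splittings along `I` and `J` -/

section Split

variable {R : Type u} [CommRing R]

/-- `U` is the direct sum of `X`, annihilated by `J`, and `Y`, annihilated by `I`. For the fiber
product, with `I` and `J` the maximal ideals of `S` and `T`, this says that `X` is an `S`-module and
`Y` is a `T`-module. -/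
structure IsSplit (I J : Ideal R) {U : Type u} [AddCommGroup U] [Module R U]
    (X Y : Submodule R U) : Prop where
  smul_left : ∀ j ∈ J, ∀ x ∈ X, j • x = 0
  smul_right : ∀ i ∈ I, ∀ y ∈ Y, i • y = 0
  isCompl : IsCompl X Y

variable {I J : Ideal R} {U : Type u} [AddCommGroup U] [Module R U]

theorem IsSplit.swap {X Y : Submodule R U} (h : IsSplit I J X Y) : IsSplit J I Y X :=
  ⟨h.smul_right, h.smul_left, h.isCompl.symm⟩

/-- The elements of the syzygy `ker p` all of whose coordinates lie in `I`. -/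
def coeffIn {n : ℕ} (I : Ideal R) (p : (Fin n → R) →ₗ[R] U) : Submodule R p.ker :=
  (Submodule.pi Set.univ fun _ : Fin n => I).comap p.ker.subtype

theorem mem_coeffIn {n : ℕ} {p : (Fin n → R) →ₗ[R] U} {w : p.ker} :
    w ∈ coeffIn I p ↔ ∀ i, w.1 i ∈ I := by
  simp [coeffIn]

theorem map_mem_smul {n : ℕ} (p : (Fin n → R) →ₗ[R] U) {c : Fin n → R} (hc : ∀ i, c i ∈ I) :
    p c ∈ (I • ⊤ : Submodule R U) := by
  rw [pi_eq_sum_univ' c, map_sum]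
  refine Submodule.sum_mem _ fun i _ => ?_
  rw [map_smul]
  exact Submodule.smul_mem_smul (hc i) trivial

theorem IsSplit.disjoint {X Y : Submodule R U} (h : IsSplit I J X Y) :
    Disjoint (I • ⊤ : Submodule R U) (J • ⊤) := by
  refine h.isCompl.disjoint.mono ?_ ?_
  · rw [← h.isCompl.sup_eq_top, Submodule.smul_sup]
    refine sup_le Submodule.smul_le_right (Submodule.smul_le.2 fun i hi y hy => ?_)
    rw [h.smul_right i hi y hy]; exact zero_mem _
  · rw [← h.isCompl.sup_eq_top, Submodule.smul_sup]
    refine sup_le (Submodule.smul_le.2 fun i hi y hy => ?_) Submodule.smul_le_right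
    rw [h.smul_left i hi y hy]; exact zero_mem _

theorem disjoint_smul_ker (hIJ : I ⊓ J = ⊥) {n : ℕ} (p : (Fin n → R) →ₗ[R] U) :
    Disjoint (I • ⊤ : Submodule R p.ker) (J • ⊤) := by
  have key : ∀ (K : Ideal R), (K • ⊤ : Submodule R p.ker) ≤ coeffIn K p := fun K =>
    Submodule.smul_le.2 fun r hr x _ => mem_coeffIn.2 fun i => K.mul_mem_right _ hr
  rw [Submodule.disjoint_def]
  intro x hx hy
  ext i
  have : x.1 i ∈ I ⊓ J := ⟨mem_coeffIn.1 (key I hx) i, mem_coeffIn.1 (key J hy) i⟩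
  rwa [hIJ] at this

end Split

/-! ### Modules over the local ring -/

section Local

variable {R : Type u} [CommRing R] [IsLocalRing R]

/-- Every finitely generated module over a local ring has a free cover whose kernel has coordinates in
the maximal ideal. -/
theorem exists_minimal_cover (M : Type u) [AddCommGroup M] [Module R M] [Module.Finite R M] :
    ∃ (n : ℕ) (p : (Fin n → R) →ₗ[R] M), Surjective p ∧
      ∀ c ∈ p.ker, ∀ i, c i ∈ maximalIdeal R := by
  let m := maximalIdeal R
  let _ : Field (R ⧸ m) := Ideal.Quotient.field m
  let V := M ⧸ (m • ⊤ : Submodule R M)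
  have : Module.Finite (R ⧸ m) V := Module.Finite.of_restrictScalars_finite R _ _
  let b := Module.finBasis (R ⧸ m) V
  choose x hx using fun i => Submodule.mkQ_surjective (m • ⊤ : Submodule R M) (b i)
  refine ⟨_, Fintype.linearCombination R x, ?_, ?_⟩
  · rw [← LinearMap.range_eq_top, ← map_mkQ_eq_top, eq_top_iff]
    rintro v -
    rw [← b.sum_repr v]
    refine Submodule.sum_mem _ fun i _ => ?_
    obtain ⟨r, hr⟩ := Ideal.Quotient.mk_surjective (b.repr v i)
    refine ⟨r • x i, ?_, ?_⟩
    · exact Submodule.smul_mem _ _ ⟨Pi.single i 1, by simp [Fintype.linearCombination_apply_single]⟩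
    · rw [map_smul, hx, ← hr]; rfl
  · intro c hc i
    have h0 : ∑ i, (Ideal.Quotient.mk m (c i)) • b i = 0 := by
      have := congrArg (m • ⊤ : Submodule R M).mkQ (LinearMap.mem_ker.1 hc)
      rw [Fintype.linearCombination_apply, map_sum, map_zero] at this
      rw [← this]
      refine Finset.sum_congr rfl fun i _ => ?_
      rw [map_smul, hx]; rfl
    exact Ideal.Quotient.eq_zero_iff_mem.1
      (Fintype.linearIndependent_iff.1 b.linearIndependent _ h0 i)

theorem exists_functional {W : Type u} [AddCommGroup W] [Module R W] {w : W}
    (hw : w ∉ (maximalIdeal R • ⊤ : Submodule R W)) :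
    ∃ φ : W →ₗ[R] (R ⧸ maximalIdeal R), φ w = 1 := by
  let _ : Field (R ⧸ maximalIdeal R) := Ideal.Quotient.field _
  let V := W ⧸ (maximalIdeal R • ⊤ : Submodule R W)
  have hv : (Submodule.Quotient.mk w : V) ≠ 0 := by rwa [Ne, Submodule.Quotient.mk_eq_zero]
  obtain ⟨φ, hφ⟩ := Module.Projective.exists_dual_eq_one (R ⧸ maximalIdeal R) hv
  exact ⟨(φ.restrictScalars R).comp (Submodule.mkQ _), hφ⟩

theorem tmul_ne_zero {W V : Type u} [AddCommGroup W] [Module R W] [AddCommGroup V] [Module R V]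
    {w : W} {v : V} (hw : w ∉ (maximalIdeal R • ⊤ : Submodule R W))
    (hv : v ∉ (maximalIdeal R • ⊤ : Submodule R V)) : w ⊗ₜ[R] v ≠ 0 := by
  obtain ⟨φ, hφ⟩ := exists_functional hw
  obtain ⟨ψ, hψ⟩ := exists_functional hv
  intro h
  have := congrArg (LinearMap.mul' R (R ⧸ maximalIdeal R) ∘ₗ TensorProduct.map φ ψ) h
  simp [hφ, hψ] at this

variable {I J : Ideal R} {U V : Type u} [AddCommGroup U] [Module R U]
  [AddCommGroup V] [Module R V]

/-- A nonzero direct summand contains a minimal generator of the whole module. -/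
theorem exists_notMem_smul_top [IsNoetherianRing R] [Module.Finite R U] {X Y : Submodule R U}
    (h : IsCompl X Y) (hX : X ≠ ⊥) : ∃ x ∈ X, x ∉ (maximalIdeal R • ⊤ : Submodule R U) := by
  by_contra! hc
  apply hX
  apply Submodule.eq_bot_of_le_smul_of_le_jacobson_bot (maximalIdeal R) X
    (IsNoetherian.noetherian X) _ (maximalIdeal_le_jacobson _)
  have h1 : X ≤ maximalIdeal R • X ⊔ maximalIdeal R • Y := by
    rw [← Submodule.smul_sup, h.sup_eq_top]; exact hc
  calc X ≤ (maximalIdeal R • X ⊔ maximalIdeal R • Y) ⊓ X := le_inf h1 le_rfl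
    _ = maximalIdeal R • X ⊔ (maximalIdeal R • Y) ⊓ X :=
      sup_inf_assoc_of_le _ Submodule.smul_le_right
    _ ≤ maximalIdeal R • X ⊔ Y ⊓ X :=
      sup_le_sup_left (inf_le_inf_right _ Submodule.smul_le_right) _
    _ = maximalIdeal R • X := by rw [h.symm.inf_eq_bot, sup_bot_eq]

/-- A kernel with coordinates in the maximal ideal splits as soon as `I • U` and `J • U` meet trivially: if
`a + b` lies in the kernel with `a` over `I` and `b` over `J`, then `p a = - p b` is zero. -/
theorem isSplit_ker (hIJ : I ⊓ J = ⊥) (hm : I ⊔ J = maximalIdeal R) {n : ℕ}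
    (p : (Fin n → R) →ₗ[R] U) (hp : ∀ c ∈ p.ker, ∀ i, c i ∈ maximalIdeal R)
    (hU : Disjoint (I • ⊤ : Submodule R U) (J • ⊤)) :
    IsSplit I J (coeffIn I p) (coeffIn J p) := by
  have hmul : ∀ i ∈ I, ∀ j ∈ J, i * j = 0 := fun i hi j hj => by
    have : i * j ∈ I ⊓ J := ⟨I.mul_mem_right _ hi, J.mul_mem_left _ hj⟩
    rwa [hIJ] at this
  refine ⟨fun j hj x hx => ?_, fun j hj x hx => ?_, ?_⟩
  · ext i
    simpa [mul_comm] using hmul _ (mem_coeffIn.1 hx i) j hj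
  · ext i
    simpa using hmul j hj _ (mem_coeffIn.1 hx i)
  · constructor
    · rw [Submodule.disjoint_def]
      intro x hx hy
      ext i
      have : x.1 i ∈ I ⊓ J := ⟨mem_coeffIn.1 hx i, mem_coeffIn.1 hy i⟩
      rwa [hIJ] at this
    · rw [codisjoint_iff, eq_top_iff]
      rintro ⟨w, hw⟩ -
      have := fun i => Submodule.mem_sup.1 (hm ▸ hp w hw i)
      choose a ha b hb hab using this
      have hab' : a + b = w := funext hab
      have h0 : p a + p b = 0 := by rw [← map_add, hab']; exact hw
      have hpa : p a = 0 := by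
        refine Submodule.disjoint_def.1 hU _ (map_mem_smul p ha) ?_
        rw [eq_neg_of_add_eq_zero_left h0]
        exact Submodule.neg_mem _ (map_mem_smul p hb)
      have hpb : p b = 0 := by rwa [hpa, zero_add] at h0
      exact Submodule.mem_sup.2 ⟨⟨a, hpa⟩, mem_coeffIn.2 ha, ⟨b, hpb⟩, mem_coeffIn.2 hb,
        Subtype.ext hab'⟩

/-- A minimal generator `w` of the syzygy of `U` with coordinates in `I` and a minimal generator `y` of
`V` annihilated by `I` give a nonzero element `w ⊗ y` of `Tor₁(U, V)`. -/
theorem eq_bot_of_coeffIn_ne_bot [IsNoetherianRing R] [Module.Finite R V]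
    {n : ℕ} (p : (Fin n → R) →ₗ[R] U) (hW : IsSplit I J (coeffIn I p) (coeffIn J p))
    {X Y : Submodule R V} (hV : IsSplit I J X Y)
    (hinj : Injective (p.ker.subtype.rTensor V)) (hne : coeffIn I p ≠ ⊥) : Y = ⊥ := by
  by_contra hY
  obtain ⟨w, hw, hw'⟩ := exists_notMem_smul_top hW.isCompl hne
  obtain ⟨y, hy, hy'⟩ := exists_notMem_smul_top hV.isCompl.symm hY
  refine tmul_ne_zero hw' hy' (hinj ?_)
  rw [map_zero, LinearMap.rTensor_tmul, Submodule.subtype_apply, pi_eq_sum_univ' w.1,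
    TensorProduct.sum_tmul]
  refine Finset.sum_eq_zero fun i _ => ?_
  rw [TensorProduct.smul_tmul, hV.smul_right _ (mem_coeffIn.1 hw i) y hy, TensorProduct.tmul_zero]

/-- If `0 ≠ r ∈ I` annihilates a minimal generator `x` of `U`, then `r` times a lift of `x` is a nonzero
relation with coordinates in `I`. -/
theorem coeffIn_ne_bot {n : ℕ} (p : (Fin n → R) →ₗ[R] U) (hp : Surjective p)
    {x : U} (hx : x ∉ (maximalIdeal R • ⊤ : Submodule R U)) {r : R} (hr : r ∈ I) (hr0 : r ≠ 0)
    (hrx : r • x = 0) : coeffIn I p ≠ ⊥ := by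
  obtain ⟨e, rfl⟩ := hp x
  intro hbot
  apply hx
  apply map_mem_smul
  intro i
  by_contra hi
  have hu : IsUnit (e i) := by simpa using hi
  have hmem : (⟨r • e, by simpa using hrx⟩ : p.ker) ∈ coeffIn I p :=
    mem_coeffIn.2 fun i => I.mul_mem_right _ hr
  rw [hbot, Submodule.mem_bot] at hmem
  have := congrFun (congrArg Subtype.val hmem) i
  exact hr0 (hu.mul_left_eq_zero.1 this)

/-- If `Tor₁(U, V)` vanishes and some `0 ≠ r ∈ I` annihilates a nonzero direct summand of `U`, then the
part of `V` annihilated by `I` is zero. -/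
theorem right_eq_bot [IsNoetherianRing R] (hIJ : I ⊓ J = ⊥) (hm : I ⊔ J = maximalIdeal R)
    [Module.Finite R U] [Module.Finite R V]
    {X Y : Submodule R U} (hU : IsSplit I J X Y) {X' Y' : Submodule R V} (hV : IsSplit I J X' Y')
    (h : TorOneVanishes R U V) {Z Z' : Submodule R U} (hZ : IsCompl Z Z') (hZ0 : Z ≠ ⊥)
    {r : R} (hr : r ∈ I) (hr0 : r ≠ 0) (hrZ : ∀ z ∈ Z, r • z = 0) : Y' = ⊥ := by
  obtain ⟨n, p, hp, hk⟩ := exists_minimal_cover (R := R) U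
  obtain ⟨x, hxX, hx⟩ := exists_notMem_smul_top hZ hZ0
  exact eq_bot_of_coeffIn_ne_bot p (isSplit_ker hIJ hm p hk hU.disjoint) hV
    (h.rTensor_injective p hp) (coeffIn_ne_bot p hp hx hr hr0 (hrZ x hxX))

/-- Two nonzero split modules annihilated by some `0 ≠ s ∈ I` have nonzero `Tor₁`. -/
theorem subsingleton_or [IsNoetherianRing R] (hIJ : I ⊓ J = ⊥) (hm : I ⊔ J = maximalIdeal R)
    (hJ : J ≠ ⊥) {s : R} (hs : s ∈ I) (hs0 : s ≠ 0)
    [Module.Finite R U] [Module.Finite R V]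
    {X Y : Submodule R U} (hU : IsSplit I J X Y) {X' Y' : Submodule R V} (hV : IsSplit I J X' Y')
    (hsU : ∀ x : U, s • x = 0) (hsV : ∀ x : V, s • x = 0)
    (h : TorOneVanishes R U V) : Subsingleton U ∨ Subsingleton V := by
  by_contra! hc
  obtain ⟨hU1, hV1⟩ := hc
  have hY' : Y' = ⊥ := right_eq_bot hIJ hm hU hV h isCompl_top_bot top_ne_bot hs hs0
    fun z _ => hsU z
  have hY : Y = ⊥ := right_eq_bot hIJ hm hV hU h.symm isCompl_top_bot top_ne_bot hs hs0
    fun z _ => hsV z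
  obtain ⟨t, ht, ht0⟩ := Submodule.exists_mem_ne_zero_of_ne_bot hJ
  have hX : X = ⊤ := by simpa [hY] using hU.isCompl.sup_eq_top
  have hX' : X' = ⊥ := right_eq_bot (inf_comm I J ▸ hIJ) (sup_comm I J ▸ hm) hU.swap hV.swap h
    (Z := X) hU.isCompl (by rw [hX]; exact top_ne_bot) ht ht0 fun z hz => hU.smul_left t ht z hz
  have := hV.isCompl.sup_eq_top
  rw [hX', hY', bot_sup_eq] at this
  exact bot_ne_top this

theorem smul_ker_eq_zero {s : R} (hs : ∀ x ∈ maximalIdeal R, x * s = 0) {n : ℕ}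
    (p : (Fin n → R) →ₗ[R] U) (hp : ∀ c ∈ p.ker, ∀ i, c i ∈ maximalIdeal R) (w : p.ker) :
    s • w = 0 := by
  ext i
  simpa [mul_comm] using hs _ (hp w.1 w.2 i)

/-- If `R` has a nonzero socle element, a module with a free minimal syzygy is free: the socle element
annihilates the syzygy, so the syzygy is zero. -/
theorem free_of_free_ker {s : R} (hs0 : s ≠ 0) (hs : ∀ x ∈ maximalIdeal R, x * s = 0)
    {n : ℕ} (p : (Fin n → R) →ₗ[R] U) (hsurj : Surjective p)
    (hp : ∀ c ∈ p.ker, ∀ i, c i ∈ maximalIdeal R) (hfree : Module.Free R p.ker) :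
    Module.Free R U := by
  have h0 : Subsingleton p.ker := by
    let b := Module.Free.chooseBasis R p.ker
    refine ⟨fun x y => b.repr.injective ?_⟩
    ext i
    exfalso
    have := congrArg (fun z => b.repr z i) (smul_ker_eq_zero hs p hp (b i))
    simp at this
    exact hs0 this
  have hinj : Injective p := LinearMap.ker_eq_bot.1 (Submodule.subsingleton_iff_eq_bot.1 h0)
  exact Module.Free.of_equiv (LinearEquiv.ofBijective p ⟨hinj, hsurj⟩)

variable [IsNoetherianRing R] {M N : Type u} [AddCommGroup M] [Module R M] [Module.Finite R M]
  [AddCommGroup N] [Module R N] [Module.Finite R N]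

/-- The case `j = 0` compares second minimal syzygies; for larger `j`, `M` is replaced by its minimal
syzygy, whose freeness passes to `M`. -/
theorem free_or_free_of_resolution (hIJ : I ⊓ J = ⊥) (hm : I ⊔ J = maximalIdeal R) (hJ : J ≠ ⊥)
    {s : R} (hsI : s ∈ I) (hs0 : s ≠ 0) (hs : ∀ x ∈ maximalIdeal R, x * s = 0)
    (P : ProjectiveResolution (ModuleCat.of R N)) (j : ℕ)
    (h : TorOneVanishes R M (P.complex.d (j + 3) (j + 2)).hom.ker) :
    Module.Free R M ∨ Module.Free R N := by
  induction j generalizing M with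
  | zero =>
    obtain ⟨n₀, p₀, hp₀, hk₀⟩ := exists_minimal_cover (R := R) M
    obtain ⟨n₁, p₁, hp₁, hk₁⟩ := exists_minimal_cover (R := R) p₀.ker
    obtain ⟨n₂, p₂, hp₂, hk₂⟩ := exists_minimal_cover (R := R) p₁.ker
    obtain ⟨n₃, p₃, hp₃, hk₃⟩ := exists_minimal_cover (R := R) p₂.ker
    obtain ⟨m₀, q₀, hq₀, hl₀⟩ := exists_minimal_cover (R := R) N
    obtain ⟨m₁, q₁, hq₁, hl₁⟩ := exists_minimal_cover (R := R) q₀.ker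
    have h1 := h.shift_exact p₀ hp₀ (resolution_exact P 1)
    have h2 := h1.shift_exact p₁ hp₁ (resolution_exact P 0)
    have h3 := h2.shift_exact p₂ hp₂ (resolution_exact_zero P)
    have h4 : TorOneVanishes R p₃.ker N :=
      h3.shift p₃ hp₃ (P.π.f 0).hom (resolution_surj P)
    have h5 := (h4.symm.shift q₀ hq₀ p₃ hp₃)
    have h6 := (h5.shift q₁ hq₁ p₂ hp₂)
    rcases subsingleton_or hIJ hm hJ hsI hs0
      (isSplit_ker hIJ hm q₁ hl₁ (disjoint_smul_ker hIJ q₀))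
      (isSplit_ker hIJ hm p₁ hk₁ (disjoint_smul_ker hIJ p₀))
      (smul_ker_eq_zero hs q₁ hl₁) (smul_ker_eq_zero hs p₁ hk₁) h6 with h | h
    · exact .inr (free_of_free_ker hs0 hs q₀ hq₀ hl₀
        (free_of_free_ker hs0 hs q₁ hq₁ hl₁ inferInstance))
    · exact .inl (free_of_free_ker hs0 hs p₀ hp₀ hk₀
        (free_of_free_ker hs0 hs p₁ hp₁ hk₁ inferInstance))
  | succ j ih =>
    obtain ⟨n, p, hp, hk⟩ := exists_minimal_cover (R := R) M
    exact (ih (h.shift_exact p hp (resolution_exact P (j + 2)))).imp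
      (free_of_free_ker hs0 hs p hp hk) id

/-- The theorem for a local ring whose maximal ideal is the direct sum of `I` and `J`, with a nonzero
socle element in `I`. -/
theorem free_or_free (hIJ : I ⊓ J = ⊥) (hm : I ⊔ J = maximalIdeal R) (hJ : J ≠ ⊥)
    {s : R} (hsI : s ∈ I) (hs0 : s ≠ 0) (hs : ∀ x ∈ maximalIdeal R, x * s = 0)
    (ℓ : ℕ) (hl : 5 ≤ ℓ)
    (htor : Subsingleton
      (((Tor (ModuleCat.{u} R) ℓ).obj (ModuleCat.of R M)).obj (ModuleCat.of R N))) :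
    Module.Free R M ∨ Module.Free R N := by
  obtain ⟨j, rfl⟩ := Nat.exists_eq_add_of_le' hl
  exact free_or_free_of_resolution hIJ hm hJ hsI hs0 hs (projectiveResolution _) j
    (torOneVanishes_of_tor _ (j + 2) htor)

end Local

/-- A noetherian local ring of depth zero which is not a field has a nonzero socle element in its
maximal ideal. -/
theorem exists_socle (S : Type u) [CommRing S] [IsNoetherianRing S] [IsLocalRing S]
    (hS : ¬ IsField S) (h : ∀ y : S, ¬ IsUnit y → y ∉ nonZeroDivisors S) :
    ∃ s ∈ maximalIdeal S, s ≠ 0 ∧ ∀ x ∈ maximalIdeal S, x * s = 0 := by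
  have hdis : Disjoint (maximalIdeal S : Set S) (nonZeroDivisors S) :=
    Set.disjoint_left.2 fun x hx => h x hx
  obtain ⟨s, hs, hs0⟩ := Submodule.exists_mem_ne_zero_of_ne_bot
    (Ideal.bot_lt_annihilator_of_disjoint_nonZeroDivisors hdis).ne'
  have hsm : ∀ x ∈ maximalIdeal S, x * s = 0 := fun x hx => by
    rw [mul_comm]; exact Submodule.mem_annihilator.1 hs x hx
  refine ⟨s, ?_, hs0, hsm⟩
  intro hu
  -- a unit annihilating the maximal ideal would make `S` a field
  refine hS (isField_iff_maximalIdeal_eq.2 (eq_bot_iff.2 fun x hx => ?_))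
  exact hu.mul_left_eq_zero.1 (hsm x hx)

end FiberProductTor

/-- **Corollary 7.2(1) (Nasseh–Sather-Wagstaff).** Let `R = S ×ₖ T` be a non-trivial fiber product
of noetherian local rings `S`, `T` with common residue field `k`. If `S` or `T` has depth `0` and
`Tor_ℓ^R(M, N) = 0` for some `ℓ ≥ 5`, then `M` or `N` is a free `R`-module. -/
theorem free_of_tor_vanishing_over_fiber_product
    (k S T : Type u) [Field k]
    [CommRing S] [IsNoetherianRing S] [IsLocalRing S]
    [CommRing T] [IsNoetherianRing T] [IsLocalRing T]
    (f : S →+* k) (g : T →+* k)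
    (hf : Function.Surjective f) (hg : Function.Surjective g)
    (hkf : RingHom.ker f = maximalIdeal S) (hkg : RingHom.ker g = maximalIdeal T)
    (hSk : ¬ IsField S) (hTk : ¬ IsField T)
    (R : Subring (S × T))
    (hR : R = RingHom.eqLocus (f.comp (RingHom.fst S T)) (g.comp (RingHom.snd S T)))
    [IsNoetherianRing ↥R] [IsLocalRing ↥R]
    (M N : Type u) [AddCommGroup M] [Module ↥R M] [Module.Finite ↥R M]
    [AddCommGroup N] [Module ↥R N] [Module.Finite ↥R N]
    -- `S` or `T` has depth `0`: every non-unit is a zerodivisor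
    (hdepth : (∀ y : S, ¬ IsUnit y → y ∉ nonZeroDivisors S) ∨
              (∀ y : T, ¬ IsUnit y → y ∉ nonZeroDivisors T))
    (ℓ : ℕ) (hl : 5 ≤ ℓ)
    (htor : Subsingleton
      (((Tor (ModuleCat.{u} ↥R) ℓ).obj (ModuleCat.of ↥R M)).obj (ModuleCat.of ↥R N))) :
    Module.Free ↥R M ∨ Module.Free ↥R N := by
  have hmem : ∀ z : S × T, z ∈ R ↔ f z.1 = g z.2 := fun z => by subst hR; rfl
  have hfu : ∀ x : S, f x = 0 ↔ x ∈ maximalIdeal S := fun x => by rw [← hkf, RingHom.mem_ker]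
  have hgu : ∀ x : T, g x = 0 ↔ x ∈ maximalIdeal T := fun x => by rw [← hkg, RingHom.mem_ker]
  let I : Ideal R := RingHom.ker ((RingHom.snd S T).comp R.subtype)
  let J : Ideal R := RingHom.ker ((RingHom.fst S T).comp R.subtype)
  have hI : ∀ r : R, r ∈ I ↔ r.1.2 = 0 := fun r => Iff.rfl
  have hJ : ∀ r : R, r ∈ J ↔ r.1.1 = 0 := fun r => Iff.rfl
  have hmax : ∀ r : R, r ∈ maximalIdeal R → r.1.1 ∈ maximalIdeal S ∧ r.1.2 ∈ maximalIdeal T := by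
    intro r hr
    have hr0 := (hmem r.1).1 r.2
    have key : f r.1.1 = 0 := by
      by_contra h0
      have h1 : IsUnit r.1.1 := by
        by_contra h; exact h0 ((hfu _).2 ((mem_maximalIdeal _).2 h))
      have h2 : IsUnit r.1.2 := by
        by_contra h; exact h0 (hr0.trans ((hgu _).2 ((mem_maximalIdeal _).2 h)))
      obtain ⟨a, ha⟩ := h1.exists_right_inv
      obtain ⟨b, hb⟩ := h2.exists_right_inv
      have hab : (a, b) ∈ R := by
        refine (hmem _).2 (mul_left_cancel₀ h0 ?_)
        change f r.1.1 * f a = f r.1.1 * g b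
        rw [← map_mul, ha, hr0, ← map_mul, hb, map_one, map_one]
      exact hr (IsUnit.of_mul_eq_one ⟨(a, b), hab⟩ (Subtype.ext (Prod.ext ha hb)))
    exact ⟨(hfu _).1 key, (hgu _).1 (hr0 ▸ key)⟩
  have hIJ : I ⊓ J = ⊥ := by
    rw [eq_bot_iff]
    intro r hr
    exact Subtype.ext (Prod.ext ((hJ r).1 hr.2) ((hI r).1 hr.1))
  have hm : I ⊔ J = maximalIdeal R := by
    refine le_antisymm (sup_le (le_maximalIdeal ?_) (le_maximalIdeal ?_)) fun r hr => ?_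
    · exact RingHom.ker_ne_top _
    · exact RingHom.ker_ne_top _
    · obtain ⟨h1, h2⟩ := hmax r hr
      refine Submodule.mem_sup.2 ⟨⟨(r.1.1, 0), (hmem _).2 ?_⟩, rfl, ⟨(0, r.1.2), (hmem _).2 ?_⟩,
        rfl, Subtype.ext (Prod.ext (add_zero _) (zero_add _))⟩
      · exact ((hfu _).2 h1).trans (map_zero g).symm
      · exact (map_zero f).trans ((hgu _).2 h2).symm
  have hI0 : I ≠ ⊥ := by
    obtain ⟨x, hx, hx0⟩ := Submodule.exists_mem_ne_zero_of_ne_bot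
      (fun h => hSk (isField_iff_maximalIdeal_eq.2 h))
    refine (Submodule.ne_bot_iff _).2 ⟨⟨(x, 0), (hmem _).2 ?_⟩, rfl, fun h => hx0 ?_⟩
    · exact ((hfu _).2 hx).trans (map_zero g).symm
    · exact congrArg (fun r : R => r.1.1) h
  have hJ0 : J ≠ ⊥ := by
    obtain ⟨x, hx, hx0⟩ := Submodule.exists_mem_ne_zero_of_ne_bot
      (fun h => hTk (isField_iff_maximalIdeal_eq.2 h))
    refine (Submodule.ne_bot_iff _).2 ⟨⟨(0, x), (hmem _).2 ?_⟩, rfl, fun h => hx0 ?_⟩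
    · exact (map_zero f).trans ((hgu _).2 hx).symm
    · exact congrArg (fun r : R => r.1.2) h
  rcases hdepth with hd | hd
  · obtain ⟨s, hs, hs0, hsm⟩ := FiberProductTor.exists_socle S hSk hd
    have hsR : (s, 0) ∈ R := (hmem _).2 (((hfu _).2 hs).trans (map_zero g).symm)
    refine FiberProductTor.free_or_free hIJ hm hJ0 (s := ⟨(s, 0), hsR⟩) rfl
      (fun h => hs0 (congrArg (fun r : R => r.1.1) h)) (fun r hr => ?_) ℓ hl htor
    exact Subtype.ext (Prod.ext (hsm _ (hmax r hr).1) (mul_zero _))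
  · obtain ⟨s, hs, hs0, hsm⟩ := FiberProductTor.exists_socle T hTk hd
    have hsR : (0, s) ∈ R := (hmem _).2 ((map_zero f).trans ((hgu _).2 hs).symm)
    refine FiberProductTor.free_or_free (inf_comm I J ▸ hIJ) (sup_comm I J ▸ hm) hI0
      (s := ⟨(0, s), hsR⟩) rfl
      (fun h => hs0 (congrArg (fun r : R => r.1.2) h)) (fun r hr => ?_) ℓ hl htor
    exact Subtype.ext (Prod.ext (mul_zero _) (hsm _ (hmax r hr).2))
end
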